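/- arXiv:2011.14609 — 4 statements merged into one kernel-verified Lean document; each statement's English description precedes it below -/
import Mathlib

section
/- Let m and n be positive integers with n ≥ 4 even, and let 0 ≤ ℓ ≤ n−1 be an integer of the same parity as m, with ℓ ≥ 1 so that n−ℓ ≤ n−1. Then the honeycomb toroidal graphs HTG(m,n,ℓ) and HTG(m,n,n−ℓ) are isomorphic. -/
/-!
The reflection `⟨i, j⟩ ↦ ⟨i, -j⟩` reverses every column. As `n` is even it preserves the parity
of `j`, hence the edges joining consecutive columns, and it turns the twist by `ℓ` in the edges
from the last column back to the first into a twist by `-ℓ = n - ℓ`.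
-/

namespace HTGPaper

/-- The honeycomb toroidal graph `HTG(m,n,ℓ)`. -/
def HTG (m n ℓ : ℕ) : SimpleGraph (ZMod m × ZMod n) :=
  SimpleGraph.fromRel (fun v w =>
    (v.1 = w.1 ∧ (w.2 = v.2 + 1 ∨ w.2 = v.2 - 1)) ∨
    (v.1.val ≠ m - 1 ∧ w.1 = v.1 + 1 ∧ w.2 = v.2 ∧ v.1.val % 2 ≠ v.2.val % 2) ∨
    (v.1.val = m - 1 ∧ w.1 = 0 ∧ w.2 = v.2 + (ℓ : ZMod n) ∧ v.2.val % 2 = m % 2))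

/-- Generators of the generalized dihedral group `G`. -/
inductive Gen | t | x | y

/-- Relators of the presentation of `G`. -/
def rels (m n ℓ : ℕ) : Set (FreeGroup Gen) :=
  {FreeGroup.of Gen.t ^ 2,
   FreeGroup.of Gen.x ^ (n / 2),
   FreeGroup.of Gen.y ^ m * (FreeGroup.of Gen.x ^ ((ℓ + m) / 2))⁻¹,
   FreeGroup.of Gen.t * FreeGroup.of Gen.x * (FreeGroup.of Gen.t)⁻¹ * FreeGroup.of Gen.x,
   FreeGroup.of Gen.t * FreeGroup.of Gen.y * (FreeGroup.of Gen.t)⁻¹ * FreeGroup.of Gen.y,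
   FreeGroup.of Gen.x * FreeGroup.of Gen.y * (FreeGroup.of Gen.x)⁻¹ * (FreeGroup.of Gen.y)⁻¹}

/-- The group `G = ⟨t,x,y | t², x^{n/2}, y^m x^{-(ℓ+m)/2}, txt⁻¹x, tyt⁻¹y, [x,y]⟩`. -/
abbrev G (m n ℓ : ℕ) : Type := PresentedGroup (rels m n ℓ)

def gent (m n ℓ : ℕ) : G m n ℓ := PresentedGroup.of Gen.t
def genx (m n ℓ : ℕ) : G m n ℓ := PresentedGroup.of Gen.x
def geny (m n ℓ : ℕ) : G m n ℓ := PresentedGroup.of Gen.y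

/-- The connection set `{t, tx, ty}`. -/
def S (m n ℓ : ℕ) : Set (G m n ℓ) :=
  {gent m n ℓ, gent m n ℓ * genx m n ℓ, gent m n ℓ * geny m n ℓ}

/-- The Cayley graph of a group with respect to a subset. -/
def cayley (H : Type*) [Group H] (T : Set H) : SimpleGraph H :=
  SimpleGraph.fromRel (fun g h => ∃ s ∈ T, h = g * s)

/-- The Cayley graph of an additive group with respect to a subset. -/
def addCayley (H : Type*) [AddGroup H] (T : Set H) : SimpleGraph H :=
  SimpleGraph.fromRel (fun g h => ∃ s ∈ T, h = g + s)

/-- `Cay(H;T)` is a normal Cayley graph of `H` if the left regular representation `H_L`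
is a normal subgroup of the automorphism group, i.e. every conjugate of a left
translation by a graph automorphism is again a left translation. -/
def IsNormalCayley (H : Type*) [Group H] (T : Set H) : Prop :=
  ∀ (f : cayley H T ≃g cayley H T) (a : H), ∃ b : H,
    ∀ g : H, f (a * f.symm g) = b * g

/-- An `s`-arc of a graph: `s+1` vertices, consecutive ones adjacent, and any three
consecutive vertices pairwise distinct. -/
def IsSArc {V : Type*} (Γ : SimpleGraph V) (s : ℕ) (p : Fin (s + 1) → V) : Prop :=
  (∀ i : Fin s, Γ.Adj (p i.castSucc) (p i.succ)) ∧
  ∀ i j : Fin (s + 1), (i : ℕ) + 2 = (j : ℕ) → p i ≠ p j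

/-- A graph is `s`-arc-transitive if its automorphism group is transitive on `s`-arcs. -/
def IsSArcTransitive {V : Type*} (Γ : SimpleGraph V) (s : ℕ) : Prop :=
  ∀ p q : Fin (s + 1) → V, IsSArc Γ s p → IsSArc Γ s q →
    ∃ f : Γ ≃g Γ, ∀ i, f (p i) = q i

/-- A graph is `s`-arc-regular if its automorphism group is regular on `s`-arcs. -/
def IsSArcRegular {V : Type*} (Γ : SimpleGraph V) (s : ℕ) : Prop :=
  ∀ p q : Fin (s + 1) → V, IsSArc Γ s p → IsSArc Γ s q →
    ∃! f : Γ ≃g Γ, ∀ i, f (p i) = q i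

/-- A graph is arc-transitive if it is `1`-arc-transitive. -/
def IsArcTransitive {V : Type*} (Γ : SimpleGraph V) : Prop :=
  IsSArcTransitive Γ 1

/-- The generalized prism `GPr(k)`. -/
def GPr (k : ℕ) : SimpleGraph (ZMod 2 × ZMod (2 * k)) :=
  SimpleGraph.fromRel (fun v w =>
    (v.1 = w.1 ∧ (w.2 = v.2 + 1 ∨ w.2 = v.2 - 1)) ∨
    (Even v.2.val ∧ w.1 = v.1 + 1 ∧ w.2 = v.2 + 1))

/-- The cubic graph on `k` vertices given by LCF-type data `f`. -/
def lcfGraph (k : ℕ) (f : ℕ → ℤ) : SimpleGraph (ZMod k) :=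
  SimpleGraph.fromRel (fun v w => w = v + 1 ∨ w = v + (f v.val : ZMod k))

/-- The cube graph `Q₃`, LCF notation `[3,-3]⁴`. -/
def cubeGraph : SimpleGraph (ZMod 8) :=
  lcfGraph 8 (fun i => if i % 2 = 0 then 3 else -3)

/-- The Heawood graph, LCF notation `[5,-5]⁷`. -/
def heawood : SimpleGraph (ZMod 14) :=
  lcfGraph 14 (fun i => if i % 2 = 0 then 5 else -5)

/-- The Möbius–Kantor graph, LCF notation `[5,-5]⁸`. -/
def mobiusKantor : SimpleGraph (ZMod 16) :=
  lcfGraph 16 (fun i => if i % 2 = 0 then 5 else -5)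

/-- The Pappus graph, LCF notation `[5,7,-7,7,-7,-5]³`. -/
def pappus : SimpleGraph (ZMod 18) :=
  lcfGraph 18 (fun i =>
    match i % 6 with
    | 0 => 5 | 1 => 7 | 2 => -7 | 3 => 7 | 4 => -7 | _ => -5)

/-- The red edges of `HTG(m,n,ℓ) = Cay(G;{t,tx,ty})`. -/
def Red (m n ℓ : ℕ) : Set (Sym2 (G m n ℓ)) :=
  {e | ∃ g : G m n ℓ, e = s(g, g * gent m n ℓ)}

/-- The blue edges. -/
def Blue (m n ℓ : ℕ) : Set (Sym2 (G m n ℓ)) :=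
  {e | ∃ g : G m n ℓ, e = s(g, g * (gent m n ℓ * genx m n ℓ))}

/-- The green edges. -/
def Green (m n ℓ : ℕ) : Set (Sym2 (G m n ℓ)) :=
  {e | ∃ g : G m n ℓ, e = s(g, g * (gent m n ℓ * geny m n ℓ))}

/-- The three color classes. -/
def colorClasses (m n ℓ : ℕ) : Set (Set (Sym2 (G m n ℓ))) :=
  {Red m n ℓ, Blue m n ℓ, Green m n ℓ}

/-- An automorphism of `Cay(G;{t,tx,ty})` is color permuting if it preserves the
partition of the edges into the three color classes. -/
def IsColorPermuting {m n ℓ : ℕ}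
    (f : cayley (G m n ℓ) (S m n ℓ) ≃g cayley (G m n ℓ) (S m n ℓ)) : Prop :=
  ∀ C ∈ colorClasses m n ℓ, Sym2.map ⇑f '' C ∈ colorClasses m n ℓ

/-- The group `Aut(H;T)` of automorphisms of `H` fixing `T` setwise. -/
def autFixing (H : Type*) [Group H] (T : Set H) : Subgroup (MulAut H) where
  carrier := {φ | ⇑φ '' T = T}
  one_mem' := by
    show ⇑(1 : MulAut H) '' T = T
    simp
  mul_mem' := by
    intro a b ha hb
    show ⇑(a * b) '' T = T
    have h : ⇑(a * b) = ⇑a ∘ ⇑b := rfl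
    rw [h, Set.image_comp]
    rw [show ⇑b '' T = T from hb, show ⇑a '' T = T from ha]
  inv_mem' := by
    intro a ha
    show ⇑a⁻¹ '' T = T
    conv_lhs => rw [← show ⇑a '' T = T from ha]
    rw [← Set.image_comp]
    have h : ⇑a⁻¹ ∘ ⇑a = id := by
      funext g
      simp
    rw [h, Set.image_id]

section AddCommGroup

variable {A : Type*} [AddCommGroup A] {a b c : A}

theorem neg_eq_neg_add_iff : -b = -a + c ↔ b = a - c := by
  rw [neg_eq_iff_eq_neg, neg_add', neg_neg]

theorem neg_eq_neg_sub_iff : -b = -a - c ↔ b = a + c := by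
  rw [sub_eq_add_neg, neg_eq_neg_add_iff, sub_neg_eq_add]

end AddCommGroup

theorem val_neg_mod_two {n : ℕ} (hn : Even n) (j : ZMod n) : (-j).val % 2 = j.val % 2 := by
  rcases eq_or_ne n 0 with rfl | hn0
  · exact congrArg (· % 2) (Int.natAbs_neg j)
  · have : NeZero n := ⟨hn0⟩
    apply (ZMod.natCast_eq_natCast_iff' _ _ 2).mp
    rw [ZMod.natCast_val, ZMod.natCast_val, ZMod.cast_neg hn.two_dvd, ZMod.neg_eq_self_mod_two]

theorem HTG_adj_neg_iff {m n ℓ ℓ' : ℕ} (hn : Even n) (hℓ : (ℓ' : ZMod n) = -ℓ)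
    (i i' : ZMod m) (j j' : ZMod n) :
    (HTG m n ℓ').Adj (i, -j) (i', -j') ↔ (HTG m n ℓ).Adj (i, j) (i', j') := by
  have column_step (a b : ZMod n) : (-b = -a + 1 ∨ -b = -a - 1) ↔ (b = a + 1 ∨ b = a - 1) := by
    rw [neg_eq_neg_add_iff, neg_eq_neg_sub_iff, or_comm]
  have twist (a b : ZMod n) : -b = -a + (ℓ' : ZMod n) ↔ b = a + (ℓ : ZMod n) := by
    rw [neg_eq_neg_add_iff, hℓ, sub_neg_eq_add]
  simp only [HTG, SimpleGraph.fromRel_adj, val_neg_mod_two hn, column_step, twist, neg_inj,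
    ne_eq, Prod.mk.injEq]

theorem statement16_general {m n ℓ ℓ' : ℕ} (hn : Even n) (hℓ : (ℓ' : ZMod n) = -ℓ) :
    Nonempty (HTG m n ℓ ≃g HTG m n ℓ') :=
  ⟨(Equiv.refl _).prodCongr (Equiv.neg _), HTG_adj_neg_iff hn hℓ _ _ _ _⟩

/-- `HTG(m,n,ℓ)` and `HTG(m,n,n-ℓ)` are isomorphic. -/
theorem statement16 (m n ℓ : ℕ) (hm : 0 < m) (hn : 4 ≤ n) (hne : Even n)
    (hl : ℓ ≤ n - 1) (hl1 : 1 ≤ ℓ) (hpar : ℓ % 2 = m % 2) :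
    Nonempty (HTG m n ℓ ≃g HTG m n (n - ℓ)) :=
  statement16_general hne <| by
    rw [Nat.cast_sub (hl.trans (n.sub_le 1)), ZMod.natCast_self, zero_sub]

end HTGPaper
end

section
/- The following isomorphisms with generalized prisms hold: (i) for each integer m ≥ 2 and each ℓ ∈ {0, 1, 2} of the same parity as m, HTG(m,4,ℓ) is isomorphic to GPr(m); (ii) for each integer n ≥ 8 with n ≡ 0 (mod 4), HTG(1,n,(n−2)/2) is isomorphic to GPr(n/4); (iii) for each even integer n ≥ 6, HTG(2,n,2) is isomorphic to GPr(n/2). -/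
namespace HTGPaper

/-!
Both graphs are bipartite, so each is determined by the three neighbours of every odd vertex. In
`GPr k` an odd vertex `(b, c)` is joined to both vertices of level `c - 1` and to `(b, c + 1)`:
consecutive levels are linked alternately by a `K₂,₂` and by two parallel edges. Hence an injection
between vertex sets of the same size that respects the bipartitions is an isomorphism onto a
generalized prism as soon as it sends two of the neighbours of each odd vertex to different
vertices of the preceding level, and the third neighbour straight up. This leaves one labelling of
`HTG(m,n,ℓ)` to be found in each of the three families.
-/

/-- The graph in which `v` and `w` are adjacent when `w` is one of the prescribed neighbours `N v`
of a vertex `v` of colour `1`, or the other way round. It presents a bipartite graph with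
2-colouring `p` by the neighbourhoods in one colour class; the values of `N` on the other class are
immaterial. -/
def bipartiteGraph {V : Type*} (p : V → ZMod 2) (N : V → Set V) : SimpleGraph V :=
  SimpleGraph.fromRel fun v w => p v = 1 ∧ w ∈ N v

lemma fromRel_eq_bipartiteGraph {V : Type*} {r : V → V → Prop} {p : V → ZMod 2} {N : V → Set V}
    (hr : ∀ v w, r v w → (p v = 1 ∧ w ∈ N v) ∨ (p w = 1 ∧ v ∈ N w))
    (hN : ∀ v w, p v = 1 → w ∈ N v → r v w ∨ r w v) :
    SimpleGraph.fromRel r = bipartiteGraph p N := by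
  ext v w
  simp only [bipartiteGraph, SimpleGraph.fromRel_adj]
  refine and_congr_right fun _ => ⟨?_, ?_⟩
  · rintro (h | h)
    exacts [hr v w h, (hr w v h).symm]
  · rintro (⟨hv, hw⟩ | ⟨hw, hv⟩)
    exacts [hN v w hv hw, (hN w v hw hv).symm]

/-- The isomorphism of bipartite graphs given by a bijection that preserves the colours and the
neighbourhoods of the vertices of colour `1`. -/
def bipartiteGraphIso {V W : Type*} {p : V → ZMod 2} {N : V → Set V} {q : W → ZMod 2}
    {M : W → Set W} (e : V ≃ W) (hcolour : ∀ v, q (e v) = p v)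
    (hneighbors : ∀ v w, p v = 1 → (e w ∈ M (e v) ↔ w ∈ N v)) :
    bipartiteGraph p N ≃g bipartiteGraph q M where
  toEquiv := e
  map_rel_iff' {v w} := by
    simp only [bipartiteGraph, SimpleGraph.fromRel_adj, e.injective.ne_iff, hcolour]
    rw [and_congr_right (hneighbors v w), and_congr_right (hneighbors w v)]

section ZModTwo

lemma zmod_two_ne_iff {a b : ZMod 2} : a ≠ b ↔ b = a + 1 := by
  revert a b; decide

variable {n : ℕ}

lemma cast_zmod_two_add_one (hn : 2 ∣ n) (x : ZMod n) :
    ((x + 1).cast : ZMod 2) = x.cast + 1 := by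
  rw [ZMod.cast_add hn, ZMod.cast_one hn]

lemma cast_zmod_two_sub_one (hn : 2 ∣ n) (x : ZMod n) :
    ((x - 1).cast : ZMod 2) = x.cast + 1 := by
  rw [ZMod.cast_sub hn, ZMod.cast_one hn, CharTwo.sub_eq_add]

lemma cast_zmod_two_eq_zero_iff_even_val [NeZero n] (x : ZMod n) :
    (x.cast : ZMod 2) = 0 ↔ Even x.val := by
  rw [← ZMod.natCast_val, ZMod.natCast_eq_zero_iff_even]

lemma cast_cast_zmod_two [NeZero n] {d : ℕ} (hd : 2 ∣ d) (x : ZMod n) :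
    ((x.cast : ZMod d).cast : ZMod 2) = x.cast := by
  rw [← ZMod.natCast_val x, ZMod.cast_natCast hd, ZMod.natCast_val]

end ZModTwo

section HoneycombToroidal

variable {m n : ℕ}

/-- The colour `i + j mod 2` of the vertex `⟨i,j⟩` of a honeycomb toroidal graph, computed on the
representatives `0 ≤ i < m` and `0 ≤ j < n`; for odd `m` it is not additive in `i`. -/
def parity (v : ZMod m × ZMod n) : ZMod 2 := v.1.cast + v.2.cast

/-- The neighbour of an odd vertex `v` of `HTG(m,n,ℓ)` in the next column, which is
column `0`, reached with a shift by `ℓ`, when `v` lies in the last column. -/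
def nextColumn (ℓ : ℕ) (v : ZMod m × ZMod n) : ZMod m × ZMod n :=
  (v.1 + 1, v.2 + if v.1.val = m - 1 then (ℓ : ZMod n) else 0)

/-- The three neighbours of an odd vertex of `HTG(m,n,ℓ)`. -/
def htgNeighbors (ℓ : ℕ) (v : ZMod m × ZMod n) : Set (ZMod m × ZMod n) :=
  {(v.1, v.2 + 1), (v.1, v.2 - 1), nextColumn ℓ v}

lemma mem_htgNeighbors_iff {ℓ : ℕ} {v w : ZMod m × ZMod n} :
    w ∈ htgNeighbors ℓ v ↔
      (v.1 = w.1 ∧ (w.2 = v.2 + 1 ∨ w.2 = v.2 - 1)) ∨ w = nextColumn ℓ v := by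
  simp only [htgNeighbors, Set.mem_insert_iff, Set.mem_singleton_iff, Prod.ext_iff]
  grind

lemma parity_eq_add_one_of_vertical (hn : 2 ∣ n) {v w : ZMod m × ZMod n} (hcol : v.1 = w.1)
    (hrow : w.2 = v.2 + 1 ∨ w.2 = v.2 - 1) : parity w = parity v + 1 := by
  rcases hrow with hrow | hrow <;>
    simp only [parity, hcol, hrow, cast_zmod_two_add_one hn, cast_zmod_two_sub_one hn, add_assoc]

lemma parity_eq_one_iff [NeZero m] [NeZero n] (v : ZMod m × ZMod n) :
    parity v = 1 ↔ v.1.val % 2 ≠ v.2.val % 2 := by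
  rw [parity, ← ZMod.natCast_val, ← ZMod.natCast_val, ← Nat.cast_add,
    ZMod.natCast_eq_one_iff_odd, Nat.odd_iff]
  omega

lemma add_one_eq_zero_of_val_eq [NeZero m] {i : ZMod m} (hi : i.val = m - 1) : i + 1 = 0 := by
  rw [← ZMod.natCast_zmod_val i, hi, ← Nat.cast_add_one, Nat.sub_add_cancel (NeZero.pos m),
    ZMod.natCast_self]

lemma parity_nextColumn [NeZero m] (hn : 2 ∣ n) {ℓ : ℕ} (hℓ : ℓ % 2 = m % 2) (v : ZMod m × ZMod n) :
    parity (nextColumn ℓ v) = parity v + 1 := by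
  have hm := NeZero.pos m
  have hcolumn : ((v.1 + 1).cast + (if v.1.val = m - 1 then (ℓ : ZMod n) else 0).cast : ZMod 2) =
      v.1.cast + 1 := by
    split_ifs with hlast
    · have hm2 : (v.1.cast : ZMod 2) + 1 = m := by
        rw [← ZMod.natCast_val, hlast, ← Nat.cast_add_one, Nat.sub_add_cancel hm]
      rw [add_one_eq_zero_of_val_eq hlast, ZMod.cast_zero, zero_add, ZMod.cast_natCast hn, hm2]
      exact (ZMod.natCast_eq_natCast_iff' _ _ _).2 hℓ
    · have hval : (v.1 + 1).val = v.1.val + 1 := by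
        have hlt : v.1.val + 1 < m := by
          have := ZMod.val_lt v.1
          omega
        rw [← ZMod.natCast_zmod_val v.1, ← Nat.cast_succ, ZMod.val_cast_of_lt hlt,
          ZMod.natCast_zmod_val]
      rw [ZMod.cast_zero, add_zero, ← ZMod.natCast_val, hval, Nat.cast_succ, ZMod.natCast_val]
  rw [parity, nextColumn, ZMod.cast_add hn, add_left_comm, hcolumn, parity]
  ring

variable [NeZero m] [NeZero n]

lemma htg_crossEdge_iff (ℓ : ℕ) (v w : ZMod m × ZMod n) :
    ((v.1.val ≠ m - 1 ∧ w.1 = v.1 + 1 ∧ w.2 = v.2 ∧ v.1.val % 2 ≠ v.2.val % 2) ∨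
      (v.1.val = m - 1 ∧ w.1 = 0 ∧ w.2 = v.2 + (ℓ : ZMod n) ∧ v.2.val % 2 = m % 2)) ↔
      parity v = 1 ∧ w = nextColumn ℓ v := by
  rw [parity_eq_one_iff, Prod.ext_iff, nextColumn]
  by_cases hlast : v.1.val = m - 1
  · have hparity : v.2.val % 2 = m % 2 ↔ (m - 1) % 2 ≠ v.2.val % 2 := by
      have := NeZero.pos m
      omega
    simp only [hlast, add_one_eq_zero_of_val_eq hlast, hparity, if_true]
    tauto
  · simp only [hlast, if_false, add_zero]
    tauto

theorem HTG_eq_bipartiteGraph (hn : 2 ∣ n) (ℓ : ℕ) :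
    HTG m n ℓ = bipartiteGraph parity (htgNeighbors ℓ) := by
  refine fromRel_eq_bipartiteGraph (fun v w h => ?_) fun v w hv hw => ?_
  · rw [htg_crossEdge_iff] at h
    rcases h with ⟨hcol, hrow⟩ | ⟨hv, hw⟩
    · by_cases hv : parity v = 1
      · exact .inl ⟨hv, mem_htgNeighbors_iff.2 (.inl ⟨hcol, hrow⟩)⟩
      · have hw : parity w = 1 := by
          rw [parity_eq_add_one_of_vertical hn hcol hrow, ← zmod_two_ne_iff.1 hv]
        exact .inr ⟨hw, mem_htgNeighbors_iff.2 (.inl ⟨hcol.symm, by grind⟩)⟩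
    · exact .inl ⟨hv, mem_htgNeighbors_iff.2 (.inr hw)⟩
  · left
    rw [htg_crossEdge_iff]
    exact (mem_htgNeighbors_iff.1 hw).imp_right fun h => ⟨hv, h⟩

end HoneycombToroidal

section GeneralizedPrism

variable {k : ℕ}

/-- The neighbours of a vertex of odd level in `GPr k`: both vertices of the preceding level
and one vertex of the following level. -/
def gprNeighbors (x : ZMod 2 × ZMod (2 * k)) : Set (ZMod 2 × ZMod (2 * k)) :=
  insert (x.1, x.2 + 1) {y | y.2 = x.2 - 1}

lemma mem_gprNeighbors_iff {x y : ZMod 2 × ZMod (2 * k)} :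
    y ∈ gprNeighbors x ↔ y = (x.1, x.2 + 1) ∨ y.2 = x.2 - 1 :=
  Iff.rfl

theorem GPr_eq_bipartiteGraph (k : ℕ) [NeZero k] :
    GPr k = bipartiteGraph (fun x => x.2.cast) gprNeighbors := by
  have hsucc (c : ZMod (2 * k)) : ((c + 1).cast : ZMod 2) = c.cast + 1 :=
    cast_zmod_two_add_one (dvd_mul_right 2 k) c
  refine fromRel_eq_bipartiteGraph ?_ ?_
  · rintro ⟨a, c⟩ ⟨b, d⟩ h
    simp only [mem_gprNeighbors_iff, Prod.mk.injEq, ← cast_zmod_two_eq_zero_iff_even_val] at h ⊢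
    by_cases hc : (c.cast : ZMod 2) = 1
    · grind
    · have hd : d = c + 1 ∨ d = c - 1 → (d.cast : ZMod 2) = 1 := by
        rintro (rfl | rfl)
        · rw [hsucc, ← zmod_two_ne_iff.1 hc]
        · rw [cast_zmod_two_sub_one (dvd_mul_right 2 k), ← zmod_two_ne_iff.1 hc]
      grind
  · rintro ⟨a, c⟩ ⟨b, d⟩ hc h
    simp only [mem_gprNeighbors_iff, Prod.mk.injEq, ← cast_zmod_two_eq_zero_iff_even_val] at h ⊢
    rcases h with ⟨rfl, rfl⟩ | rfl
    · exact .inl (.inl ⟨rfl, .inl rfl⟩)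
    · by_cases hab : a = b
      · exact .inl (.inl ⟨hab, .inr rfl⟩)
      · have hd : ((c - 1).cast : ZMod 2) = 0 := by
          rw [cast_zmod_two_sub_one (dvd_mul_right 2 k), hc]
          rfl
        exact .inr (.inr ⟨hd, zmod_two_ne_iff.1 (Ne.symm hab), by ring⟩)

theorem nonempty_HTG_iso_GPr_of_labelling {m n ℓ k : ℕ} [NeZero m] [NeZero n] [NeZero k]
    (hn : 2 ∣ n) (hcard : m * n = 2 * (2 * k)) {f : ZMod m × ZMod n → ZMod 2 × ZMod (2 * k)}
    (hinj : Function.Injective f) (hparity : ∀ v, ((f v).2.cast : ZMod 2) = parity v)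
    {a b c : ZMod m × ZMod n → ZMod m × ZMod n}
    (hneighbors : ∀ v, htgNeighbors ℓ v = {a v, b v, c v})
    (ha : ∀ v, parity v = 1 → (f (a v)).2 = (f v).2 - 1)
    (hb : ∀ v, parity v = 1 → (f (b v)).2 = (f v).2 - 1)
    (hab : ∀ v, parity v = 1 → (f (a v)).1 ≠ (f (b v)).1)
    (hc : ∀ v, parity v = 1 → f (c v) = ((f v).1, (f v).2 + 1)) :
    Nonempty (HTG m n ℓ ≃g GPr k) := by
  have hbij : Function.Bijective f :=
    hinj.bijective_of_nat_card_le (by simp [hcard])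
  rw [HTG_eq_bipartiteGraph hn, GPr_eq_bipartiteGraph]
  refine ⟨bipartiteGraphIso (.ofBijective f hbij) hparity fun v w hv => ?_⟩
  have hlevel : (f w).2 = (f v).2 - 1 ↔ w = a v ∨ w = b v := by
    refine ⟨fun hw => ?_, ?_⟩
    · have hlabel : (f w).1 = (f (a v)).1 ∨ (f w).1 = (f (b v)).1 := by
        have := hab v hv
        generalize (f w).1 = x, (f (a v)).1 = y, (f (b v)).1 = z at *
        revert x y z; decide
      exact hlabel.imp (fun h => hinj (Prod.ext h (hw.trans (ha v hv).symm)))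
        fun h => hinj (Prod.ext h (hw.trans (hb v hv).symm))
    · rintro (rfl | rfl)
      exacts [ha v hv, hb v hv]
  simp only [Equiv.ofBijective_apply, mem_gprNeighbors_iff, hlevel,
    ← hc v hv, hinj.eq_iff, hneighbors, Set.mem_insert_iff, Set.mem_singleton_iff]
  tauto

end GeneralizedPrism

section HalfIndex

/-- The half, `0` or `1`, of the cycle `ZMod (2 * d)` that contains `x`. The modulus is left free so
that the definition also applies to `ZMod 4` as it stands. -/
def half {n : ℕ} (d : ℕ) (x : ZMod n) : ZMod 2 := (x.val / d : ℕ)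

variable {d : ℕ} [NeZero d]

lemma half_add_self (x : ZMod (2 * d)) : half d (x + (d : ZMod (2 * d))) = half d x + 1 := by
  have hd := NeZero.pos d
  have hval : (d : ZMod (2 * d)).val = d := ZMod.val_cast_of_lt (by omega)
  rcases lt_or_ge (x.val + d) (2 * d) with hx | hx
  · rw [half, ZMod.val_add_of_lt (by rwa [hval]), hval, Nat.add_div_right _ hd, Nat.cast_succ, half]
  · have hsum : (x + (d : ZMod (2 * d))).val + d = x.val := by
      have := ZMod.val_add_val_of_le (a := x) (b := d) (by rwa [hval])
      omega
    rw [half, half, ← hsum, Nat.add_div_right _ hd, Nat.cast_succ, add_assoc,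
      CharTwo.add_self_eq_zero, add_zero]

lemma half_add_one_of_even (hd : Even d) {x : ZMod (2 * d)} (hx : (x.cast : ZMod 2) = 0) :
    half d (x + 1) = half d x := by
  rw [cast_zmod_two_eq_zero_iff_even_val] at hx
  have hdvd : ¬d ∣ x.val + 1 := fun h =>
    Nat.not_even_iff_odd.2 hx.add_one (even_iff_two_dvd.2 (hd.two_dvd.trans h))
  have hlt : x.val + 1 < 2 * d :=
    lt_of_le_of_ne (ZMod.val_lt x) fun h => hdvd ⟨2, by rw [h, mul_comm]⟩
  have hone : (1 : ZMod (2 * d)).val = 1 := ZMod.val_one'' (by omega)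
  rw [half, ZMod.val_add_of_lt (by rwa [hone]), hone, Nat.succ_div_of_not_dvd hdvd, half]

lemma eq_of_half_eq_of_cast_eq {x y : ZMod (2 * d)} (hhalf : half d x = half d y)
    (hcast : (x.cast : ZMod d) = y.cast) : x = y := by
  have hlt (z : ZMod (2 * d)) : z.val / d < 2 :=
    Nat.div_lt_of_lt_mul (mul_comm 2 d ▸ ZMod.val_lt z)
  have hmod : x.val % d = y.val % d := by
    rwa [← ZMod.natCast_val, ← ZMod.natCast_val, ZMod.natCast_eq_natCast_iff'] at hcast
  have hdiv : x.val / d = y.val / d := by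
    rw [half, half, ZMod.natCast_eq_natCast_iff'] at hhalf
    rwa [Nat.mod_eq_of_lt (hlt x), Nat.mod_eq_of_lt (hlt y)] at hhalf
  apply ZMod.val_injective
  rw [← Nat.div_add_mod x.val d, ← Nat.div_add_mod y.val d, hdiv, hmod]

end HalfIndex

section TwoColumns

variable {k : ℕ}

/-- The labelling of the vertices of `HTG(2,2k,2)` by those of `GPr(k)`. The level is `-i-j` and
not `i+j` because the 4-cycles of `HTG(2,2k,2)` join odd vertices to their upper neighbours. -/
def twoColumnLabel (v : ZMod 2 × ZMod (2 * k)) : ZMod 2 × ZMod (2 * k) :=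
  (v.1, -v.1.val - v.2)

lemma twoColumnLabel_involutive : Function.Involutive (twoColumnLabel (k := k)) :=
  fun v => Prod.ext rfl (sub_sub_cancel _ v.2)

lemma nextColumn_of_two_columns (v : ZMod 2 × ZMod (2 * k)) :
    nextColumn 2 v = (v.1 + 1, v.2 + 2 * v.1.val) := by
  obtain ⟨i, j⟩ := v
  fin_cases i <;> simp [nextColumn, ZMod.val]

lemma natCast_val_add_one_add_val {R : Type*} [Semiring R] (i : ZMod 2) :
    ((i + 1).val + i.val : R) = 1 := by
  have hval : (i + 1).val + i.val = 1 := by revert i; decide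
  exact_mod_cast congrArg (Nat.cast : ℕ → R) hval

theorem nonempty_HTG_two_iso_GPr (k : ℕ) [NeZero k] : Nonempty (HTG 2 (2 * k) 2 ≃g GPr k) := by
  have h2 : 2 ∣ 2 * k := dvd_mul_right 2 k
  refine nonempty_HTG_iso_GPr_of_labelling h2 rfl twoColumnLabel_involutive.injective (fun v => ?_)
    (a := fun v => (v.1, v.2 + 1)) (b := nextColumn 2) (c := fun v => (v.1, v.2 - 1))
    (fun v => ?_) (fun v _ => ?_) (fun v _ => ?_) (fun v _ => ?_) fun v _ => ?_
  · rw [twoColumnLabel, parity, ZMod.cast_sub h2, ZMod.cast_neg h2, ZMod.cast_natCast h2,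
      ZMod.natCast_val, CharTwo.neg_eq, CharTwo.sub_eq_add]
  · rw [htgNeighbors, Set.pair_comm]
  · simp only [twoColumnLabel]
    ring
  · simp only [twoColumnLabel, nextColumn_of_two_columns]
    linear_combination -natCast_val_add_one_add_val (R := ZMod (2 * k)) v.1
  · rw [nextColumn_of_two_columns]
    exact zmod_two_ne_iff.2 rfl
  · exact Prod.ext rfl (by simp only [twoColumnLabel]; ring)

end TwoColumns

section OneColumn

variable {k : ℕ}

/-- The labelling of the vertices of `HTG(1,4k,2k-1)` by those of `GPr(k)`. The shift by one in the
first label gives the vertices `j` and `j + 1` the same first label when `j` is odd. -/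
def oneColumnLabel (v : ZMod 1 × ZMod (2 * (2 * k))) : ZMod 2 × ZMod (2 * k) :=
  (half (2 * k) (v.2 + 1), v.2.cast)

lemma cast_add_one_of_two_mul {d : ℕ} (x : ZMod (2 * d)) :
    ((x + 1).cast : ZMod d) = x.cast + 1 := by
  rw [ZMod.cast_add (dvd_mul_left d 2), ZMod.cast_one (dvd_mul_left d 2)]

variable [NeZero k]

lemma oneColumnLabel_injective : Function.Injective (oneColumnLabel (k := k)) := by
  intro v w h
  obtain ⟨hhalf, hlevel⟩ := Prod.ext_iff.1 h
  refine Prod.ext (Subsingleton.elim _ _) (add_right_cancel (b := 1) ?_)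
  refine eq_of_half_eq_of_cast_eq hhalf ?_
  rw [cast_add_one_of_two_mul, cast_add_one_of_two_mul]
  exact congrArg (· + 1) hlevel

lemma cast_oneColumnLabel_snd (v : ZMod 1 × ZMod (2 * (2 * k))) :
    ((oneColumnLabel v).2.cast : ZMod 2) = parity v := by
  rw [oneColumnLabel, cast_cast_zmod_two (dvd_mul_right 2 k), parity, Subsingleton.elim v.1 0,
    ZMod.cast_zero, zero_add]

lemma nextColumn_of_one_column (v : ZMod 1 × ZMod (2 * (2 * k))) :
    nextColumn (2 * k - 1) v = (v.1, v.2 - 1 + (2 * k : ℕ)) := by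
  have hlast : v.1.val = 1 - 1 := by rw [Subsingleton.elim v.1 0, ZMod.val_zero]
  have hk : 1 ≤ 2 * k := by
    have := NeZero.pos k
    omega
  refine Prod.ext (Subsingleton.elim _ _) ?_
  rw [nextColumn, if_pos hlast, Nat.cast_sub hk, Nat.cast_one]
  ring

theorem nonempty_HTG_one_iso_GPr (k : ℕ) [NeZero k] :
    Nonempty (HTG 1 (2 * (2 * k)) (2 * k - 1) ≃g GPr k) := by
  have hdvd : 2 * k ∣ 2 * (2 * k) := dvd_mul_left _ _
  refine nonempty_HTG_iso_GPr_of_labelling (dvd_mul_right 2 _) (one_mul _) oneColumnLabel_injective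
    cast_oneColumnLabel_snd (a := fun v => (v.1, v.2 - 1)) (b := nextColumn (2 * k - 1))
    (c := fun v => (v.1, v.2 + 1))
    (fun v => ?_) (fun v _ => ?_) (fun v _ => ?_) (fun v _ => ?_) fun v hv => ?_
  · rw [htgNeighbors, Set.insert_comm, Set.pair_comm]
  · simp only [oneColumnLabel]
    rw [ZMod.cast_sub hdvd, ZMod.cast_one hdvd]
  · simp only [oneColumnLabel, nextColumn_of_one_column]
    rw [ZMod.cast_add hdvd, ZMod.cast_sub hdvd, ZMod.cast_one hdvd, ZMod.cast_natCast hdvd,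
      ZMod.natCast_self, add_zero]
  · simp only [oneColumnLabel, nextColumn_of_one_column, add_right_comm _ _ (1 : ZMod _)]
    rw [half_add_self, zmod_two_ne_iff]
  · have heven : ((v.2 + 1).cast : ZMod 2) = 0 := by
      rw [cast_zmod_two_add_one (dvd_mul_right 2 _), ← cast_cast_zmod_two (dvd_mul_right 2 k)]
      exact (congrArg (· + 1) ((cast_oneColumnLabel_snd v).trans hv)).trans CharTwo.two_eq_zero
    simp only [oneColumnLabel]
    rw [half_add_one_of_even (even_two_mul k) heven, cast_add_one_of_two_mul]

end OneColumn

section FourRows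

lemma half_two_add_one_ne_half_two_sub_one (j : ZMod 4) : half 2 (j + 1) ≠ half 2 (j - 1) := by
  revert j; decide

lemma eq_of_half_two_add_eq {j j' s : ZMod 4} (hcast : (j.cast : ZMod 2) = j'.cast)
    (hhalf : half 2 (j + s) = half 2 (j' + s)) : j = j' := by
  revert j j' s; decide

variable {m ℓ : ℕ}

lemma natCast_two_mul_val_add_one [NeZero m] (i : ZMod m) :
    ((2 * (i + 1).val : ℕ) : ZMod (2 * m)) = (2 * i.val : ℕ) + 1 + 1 := by
  have hmod : (i + 1).val ≡ i.val + 1 [MOD m] := by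
    rw [← ZMod.natCast_eq_natCast_iff]
    simp
  rw [(ZMod.natCast_eq_natCast_iff _ _ _).2 (hmod.mul_left' 2)]
  push_cast
  ring

/-- The labelling of the vertices of `HTG(m,4,ℓ)` by those of `GPr(m)`: column `i` becomes the
levels `2i` and `2i+1`. An odd vertex has the same first label as its neighbour in the next column,
which takes care of the shift by `ℓ` in the last column. -/
def fourRowLabel (ℓ : ℕ) (v : ZMod m × ZMod 4) : ZMod 2 × ZMod (2 * m) :=
  (half 2 (if parity v = 1 then (nextColumn ℓ v).2 else v.2), (2 * v.1.val + (parity v).val : ℕ))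

lemma fourRowLabel_of_odd {v : ZMod m × ZMod 4} (hv : parity v = 1) :
    fourRowLabel ℓ v = (half 2 (nextColumn ℓ v).2, ((2 * v.1.val : ℕ) : ZMod (2 * m)) + 1) := by
  rw [fourRowLabel, if_pos hv, hv, ZMod.val_one, Nat.cast_succ]

lemma fourRowLabel_of_even {v : ZMod m × ZMod 4} (hv : parity v = 0) :
    fourRowLabel ℓ v = (half 2 v.2, ((2 * v.1.val : ℕ) : ZMod (2 * m))) := by
  rw [fourRowLabel, if_neg (by simp [hv]), hv, ZMod.val_zero, add_zero]

lemma fourRowLabel_injective [NeZero m] : Function.Injective (fourRowLabel (m := m) ℓ) := by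
  rintro ⟨i, j⟩ ⟨i', j'⟩ h
  obtain ⟨hlabel, hlevel⟩ := Prod.ext_iff.1 h
  have hlt (i : ZMod m) (j : ZMod 4) : 2 * i.val + (parity (i, j)).val < 2 * m := by
    have := ZMod.val_lt i
    have := ZMod.val_lt (parity (i, j))
    omega
  simp only [fourRowLabel] at hlabel hlevel
  rw [ZMod.natCast_eq_natCast_iff', Nat.mod_eq_of_lt (hlt i j),
    Nat.mod_eq_of_lt (hlt i' j')] at hlevel
  have hp := ZMod.val_lt (parity (i, j))
  have hp' := ZMod.val_lt (parity (i', j'))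
  obtain rfl : i = i' := ZMod.val_injective m (by omega)
  have hparity : parity (i, j) = parity (i, j') := ZMod.val_injective 2 (by omega)
  have hcast : (j.cast : ZMod 2) = j'.cast := add_left_cancel hparity
  refine Prod.ext rfl ?_
  rw [hparity] at hlabel
  split_ifs at hlabel
  · exact eq_of_half_two_add_eq hcast hlabel
  · exact eq_of_half_two_add_eq (s := 0) hcast (by simpa using hlabel)

theorem nonempty_HTG_four_iso_GPr (m ℓ : ℕ) [NeZero m] (hℓ : ℓ % 2 = m % 2) :
    Nonempty (HTG m 4 ℓ ≃g GPr m) := by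
  have h2 : 2 ∣ 4 := ⟨2, rfl⟩
  have heven {v w : ZMod m × ZMod 4} (hv : parity v = 1) (hw : parity w = parity v + 1) :
      parity w = 0 := by
    rw [hw, hv]
    rfl
  have hup (v : ZMod m × ZMod 4) (hv : parity v = 1) : parity (v.1, v.2 + 1) = 0 :=
    heven hv (parity_eq_add_one_of_vertical h2 rfl (.inl rfl))
  have hdown (v : ZMod m × ZMod 4) (hv : parity v = 1) : parity (v.1, v.2 - 1) = 0 :=
    heven hv (parity_eq_add_one_of_vertical h2 rfl (.inr rfl))
  refine nonempty_HTG_iso_GPr_of_labelling h2 (by ring) (fourRowLabel_injective (ℓ := ℓ))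
    (fun v => ?_) (a := fun v => (v.1, v.2 + 1)) (b := fun v => (v.1, v.2 - 1)) (c := nextColumn ℓ)
    (fun _ => rfl) (fun v hv => ?_) (fun v hv => ?_) (fun v hv => ?_) fun v hv => ?_
  · rw [fourRowLabel, ZMod.cast_natCast (dvd_mul_right 2 m), Nat.cast_add, Nat.cast_mul,
      ZMod.natCast_self, zero_mul, zero_add, ZMod.natCast_zmod_val]
  · rw [fourRowLabel_of_even (hup v hv), fourRowLabel_of_odd hv, add_sub_cancel_right]
  · rw [fourRowLabel_of_even (hdown v hv), fourRowLabel_of_odd hv, add_sub_cancel_right]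
  · rw [fourRowLabel_of_even (hup v hv), fourRowLabel_of_even (hdown v hv)]
    exact half_two_add_one_ne_half_two_sub_one v.2
  · rw [fourRowLabel_of_even (heven hv (parity_nextColumn h2 hℓ v)), fourRowLabel_of_odd hv]
    exact Prod.ext rfl (natCast_two_mul_val_add_one v.1)

end FourRows

theorem statement17_general :
    (∀ m ℓ : ℕ, 0 < m → ℓ % 2 = m % 2 → Nonempty (HTG m 4 ℓ ≃g GPr m)) ∧
    (∀ n : ℕ, 0 < n → n % 4 = 0 → Nonempty (HTG 1 n ((n - 2) / 2) ≃g GPr (n / 4))) ∧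
    (∀ n : ℕ, 0 < n → Even n → Nonempty (HTG 2 n 2 ≃g GPr (n / 2))) := by
  refine ⟨fun m ℓ hm hℓ => ?_, fun n hn h4 => ?_, fun n hn heven => ?_⟩
  · have : NeZero m := ⟨hm.ne'⟩
    exact nonempty_HTG_four_iso_GPr m ℓ hℓ
  · obtain ⟨k, rfl⟩ : ∃ k, n = 2 * (2 * k) := ⟨n / 4, by omega⟩
    have : NeZero k := ⟨by omega⟩
    rw [show (2 * (2 * k) - 2) / 2 = 2 * k - 1 by omega, show 2 * (2 * k) / 4 = k by omega]
    exact nonempty_HTG_one_iso_GPr k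
  · obtain ⟨k, rfl⟩ := heven.two_dvd
    have : NeZero k := ⟨by omega⟩
    rw [Nat.mul_div_cancel_left k two_pos]
    exact nonempty_HTG_two_iso_GPr k

/-- Isomorphisms of girth-4 honeycomb toroidal graphs with generalized prisms:
(i) `HTG(m,4,ℓ) ≅ GPr(m)` for `m ≥ 2` and `ℓ ∈ {0,1,2}` of the same parity as `m`;
(ii) `HTG(1,n,(n-2)/2) ≅ GPr(n/4)` for `n ≥ 8`, `n ≡ 0 (mod 4)`;
(iii) `HTG(2,n,2) ≅ GPr(n/2)` for even `n ≥ 6`. -/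
theorem statement17 :
    (∀ m ℓ : ℕ, 2 ≤ m → (ℓ = 0 ∨ ℓ = 1 ∨ ℓ = 2) → ℓ % 2 = m % 2 →
      Nonempty (HTG m 4 ℓ ≃g GPr m)) ∧
    (∀ n : ℕ, 8 ≤ n → n % 4 = 0 →
      Nonempty (HTG 1 n ((n - 2) / 2) ≃g GPr (n / 4))) ∧
    (∀ n : ℕ, 6 ≤ n → Even n →
      Nonempty (HTG 2 n 2 ≃g GPr (n / 2))) := by
  obtain ⟨hfour, hone, htwo⟩ := statement17_general
  exact ⟨fun m ℓ hm _ => hfour m ℓ (by omega), fun n hn => hone n (by omega),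
    fun n hn => htwo n (by omega)⟩

end HTGPaper
end

section
/- The following isomorphisms hold: (i) for each even integer n ≥ 6, the graphs HTG(2,n,0) and HTG(1,2n,3) are both isomorphic to the prism graph Pr(n) = Cay(Z_2 × Z_n; {(1,0), (0,±1)}); (ii) for each odd integer n ≥ 3, the graphs HTG(1,2n,n) and HTG(1,2n,3) are both isomorphic to the Möbius ladder Ml(n) = Cay(Z_{2n}; {±1, n}). -/
/-!
The edges `{2k - 1, 2k}` of `HTG(1,2n,3)` are the rungs of a cyclic ladder in which the two rails
between consecutive rungs always cross, that is, of `Cay(ℤ₂ × ℤₙ; {(1,0), (1,±1)})`. For even `n`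
the shear `(a, k) ↦ (a + k, k)` uncrosses all rails and gives the prism. For odd `n` the Chinese
remainder isomorphism `ℤ₂ × ℤₙ ≅ ℤ₂ₙ` sends the connection set to `{n, ±1}` and gives the Möbius
ladder. The graph `HTG(2,n,0)` equals `Pr(n)`: parity only decides which clause of the definition
supplies a rung. Likewise `HTG(1,2n,n)` is `Ml(n)`, because for odd `n` every chord `{u, u + n}` has
exactly one odd end.
-/

namespace HTGPaper

/-- The prism graph `Pr(n) = Cay(ℤ₂ × ℤₙ; {(1,0),(0,±1)})`. -/
def prismGraph (n : ℕ) : SimpleGraph (ZMod 2 × ZMod n) :=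
  addCayley (ZMod 2 × ZMod n) {((1 : ZMod 2), (0 : ZMod n)), (0, 1), (0, -1)}

/-- The Möbius ladder `Ml(n) = Cay(ℤ₂ₙ; {±1, n})`. -/
def mobiusLadder (n : ℕ) : SimpleGraph (ZMod (2 * n)) :=
  addCayley (ZMod (2 * n)) {(1 : ZMod (2 * n)), -1, (n : ZMod (2 * n))}

theorem zmod_two_eq_zero_or_one (a : ZMod 2) : a = 0 ∨ a = 1 := by
  revert a
  decide

theorem neg_add_zmod_two_eq_one_iff (a b : ZMod 2) : -a + b = 1 ↔ a ≠ b := by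
  revert a b
  decide

section Parity

variable {N : ℕ}

theorem odd_iff_castHom_eq_one (hN : 2 ∣ N) (x : ZMod N) :
    Odd x ↔ ZMod.castHom hN (ZMod 2) x = 1 := by
  constructor
  · intro hx
    obtain ⟨k, hk⟩ := hx.map (ZMod.castHom hN (ZMod 2))
    simpa [CharTwo.two_eq_zero] using hk
  · obtain ⟨z, rfl⟩ := ZMod.intCast_surjective x
    rw [map_intCast, ZMod.intCast_eq_one_iff_odd]
    exact Odd.intCast

theorem not_odd_iff_castHom_eq_zero (hN : 2 ∣ N) (x : ZMod N) :
    ¬Odd x ↔ ZMod.castHom hN (ZMod 2) x = 0 := by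
  rw [odd_iff_castHom_eq_one hN]
  rcases zmod_two_eq_zero_or_one (ZMod.castHom hN (ZMod 2) x) with h | h <;> simp [h]

theorem odd_val_iff (hN : 2 ∣ N) (x : ZMod N) : Odd x.val ↔ Odd x := by
  rcases N with _ | N
  · exact Int.natAbs_odd
  · rw [odd_iff_castHom_eq_one hN, ← ZMod.natCast_eq_one_iff_odd, ZMod.natCast_val,
      ZMod.castHom_apply]

theorem odd_add_natCast_iff (hN : 2 ∣ N) {ℓ : ℕ} (hℓ : Odd ℓ) (x : ZMod N) :
    Odd (x + ℓ) ↔ ¬Odd x := by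
  rw [not_odd_iff_castHom_eq_zero hN, odd_iff_castHom_eq_one hN, map_add, map_natCast,
    hℓ.natCast_zmod_two, add_eq_right]

theorem odd_add_one_iff (hN : 2 ∣ N) (x : ZMod N) : Odd (x + 1) ↔ ¬Odd x := by
  simpa using odd_add_natCast_iff hN odd_one x

end Parity

/-- The cycle on `ZMod N` together with the chords joining each odd vertex `u` to `u + ℓ`.
For even `N` this is `HTG 1 N ℓ` without its trivial first coordinate. -/
def oddChordCycle (N ℓ : ℕ) : SimpleGraph (ZMod N) :=
  SimpleGraph.fromRel fun u v => v = u + 1 ∨ Odd u ∧ v = u + ℓ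

/-- The second projection, which identifies `HTG 1 N ℓ` with a cycle with chords. -/
def htgOneIso {N : ℕ} (hN : 2 ∣ N) (ℓ : ℕ) : HTG 1 N ℓ ≃g oddChordCycle N ℓ where
  toEquiv := Equiv.uniqueProd (ZMod N) (ZMod 1)
  map_rel_iff' := by
    rintro ⟨i, u⟩ ⟨j, v⟩
    obtain rfl := Subsingleton.elim i j
    have hi : i = 0 := Subsingleton.elim i 0
    simp only [HTG, oddChordCycle, SimpleGraph.fromRel_adj, Equiv.uniqueProd_apply,
      ← odd_val_iff hN, Nat.odd_iff, hi, eq_sub_iff_add_eq, Prod.mk.injEq, ne_eq, true_and,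
      ZMod.val_zero, Nat.sub_self, not_true_eq_false, false_and, false_or, Nat.one_mod]
    grind

section Bipartite

variable {N ℓ : ℕ} {u v : ZMod N}

theorem odd_iff_not_odd_of_oddChordCycle_adj (hN : 2 ∣ N) (hℓ : Odd ℓ)
    (h : (oddChordCycle N ℓ).Adj u v) : Odd u ↔ ¬Odd v := by
  obtain ⟨-, (rfl | ⟨-, rfl⟩) | (rfl | ⟨-, rfl⟩)⟩ := h <;>
    simp [odd_add_one_iff hN, odd_add_natCast_iff hN hℓ]

theorem oddChordCycle_adj_of_odd (hu : Odd u) (hv : ¬Odd v) :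
    (oddChordCycle N ℓ).Adj u v ↔ v = u + 1 ∨ u = v + 1 ∨ v = u + ℓ := by
  have hne : u ≠ v := fun h => hv (h ▸ hu)
  simp only [oddChordCycle, SimpleGraph.fromRel_adj, ne_eq, hne, not_false_eq_true, hu, hv,
    true_and, false_and, or_false]
  tauto

end Bipartite

section AddCayley

variable {H K : Type*} [AddGroup H] [AddGroup K]

/-- A group isomorphism carrying one connection set to another, as a graph isomorphism. -/
def addCayleyIso (e : H ≃+ K) {T : Set H} {U : Set K} (h : e '' T = U) :
    addCayley H T ≃g addCayley K U where
  toEquiv := e.toEquiv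
  map_rel_iff' := by
    subst h
    intro x y
    simp [addCayley, ← map_add]

theorem addCayley_adj_of_neg_mem {T : Set H} (hT : ∀ s ∈ T, -s ∈ T) {g h : H} :
    (addCayley H T).Adj g h ↔ g ≠ h ∧ -g + h ∈ T := by
  have mem_comm : -h + g ∈ T ↔ -g + h ∈ T :=
    ⟨fun hs => by simpa using hT _ hs, fun hs => by simpa using hT _ hs⟩
  simp only [addCayley, SimpleGraph.fromRel_adj, ← neg_add_eq_iff_eq_add, exists_eq_right',
    mem_comm, or_self]

end AddCayley

/-- The ladder with rungs `{(0, k), (1, k)}`, closed up cyclically, in which the two rails between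
consecutive rungs cross. Depending on the parity of `n`, uncrossing all rails produces the prism
or the Möbius ladder. -/
def crossedLadder (n : ℕ) : SimpleGraph (ZMod 2 × ZMod n) :=
  addCayley (ZMod 2 × ZMod n) {(1, 0), (1, 1), (1, -1)}

theorem crossedLadder_adj {n : ℕ} {a b : ZMod 2} {k l : ZMod n} :
    (crossedLadder n).Adj (a, k) (b, l) ↔ a ≠ b ∧ (l = k ∨ l = k + 1 ∨ k = l + 1) := by
  rw [crossedLadder, addCayley_adj_of_neg_mem (by simp [CharTwo.neg_eq])]
  simp only [Prod.neg_mk, Prod.mk_add_mk, Set.mem_insert_iff, Set.mem_singleton_iff, Prod.mk.injEq,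
    neg_add_zmod_two_eq_one_iff]
  grind

theorem two_mul_natCast_self (n : ℕ) : (2 * n : ZMod (2 * n)) = 0 := by
  exact_mod_cast ZMod.natCast_self (2 * n)

section Double

variable (n : ℕ)

/-- Multiplication by two, as an embedding of `ZMod n` onto the even elements of `ZMod (2 * n)`. -/
def double : ZMod n →+ ZMod (2 * n) :=
  ZMod.lift n ⟨(AddMonoidHom.mulLeft 2).comp (Int.castAddHom _), by
    simpa using two_mul_natCast_self n⟩

theorem double_intCast (z : ℤ) : double n z = 2 * z := by
  simp [double]

theorem double_one : double n 1 = 2 := by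
  simpa using double_intCast n 1

theorem double_injective : Function.Injective (double n) := by
  refine (ZMod.lift_injective n).2 fun z hz => ?_
  have hz' : ((2 * z : ℤ) : ZMod (2 * n)) = 0 := by simpa using hz
  rw [ZMod.intCast_zmod_eq_zero_iff_dvd] at hz' ⊢
  exact Int.dvd_of_mul_dvd_mul_left two_ne_zero (mod_cast hz')

theorem not_odd_double (k : ZMod n) : ¬Odd (double n k) := by
  obtain ⟨z, rfl⟩ := ZMod.intCast_surjective k
  rw [not_odd_iff_castHom_eq_zero (dvd_mul_right 2 n), double_intCast, map_mul, map_ofNat,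
    CharTwo.two_eq_zero (R := ZMod 2), zero_mul]

end Double

/-- The numbering of the vertices of `crossedLadder n` along the Hamiltonian cycle
`(0, 0), (1, 1), (0, 1), (1, 2), …` that alternates between rails and rungs. -/
def zigzag (n : ℕ) (x : ZMod 2 × ZMod n) : ZMod (2 * n) :=
  double n x.2 - x.1.val

section Zigzag

variable {n : ℕ}

theorem zigzag_zero (k : ZMod n) : zigzag n (0, k) = double n k := by
  simp [zigzag]

theorem zigzag_one_add_one (k : ZMod n) : zigzag n (1, k) + 1 = double n k := by
  simp [zigzag, ZMod.val_one]

theorem odd_zigzag_iff (x : ZMod 2 × ZMod n) : Odd (zigzag n x) ↔ x.1 = 1 := by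
  obtain ⟨a, k⟩ := x
  obtain rfl | rfl := zmod_two_eq_zero_or_one a
  · simp [zigzag_zero, not_odd_double]
  · have h := odd_add_one_iff (dvd_mul_right 2 n) (zigzag n (1, k))
    rw [zigzag_one_add_one] at h
    simp [not_not.1 (h.not.1 (not_odd_double n k))]

theorem zigzag_injective : Function.Injective (zigzag n) := by
  rintro ⟨a, k⟩ ⟨b, l⟩ h
  have hab : a = 1 ↔ b = 1 := by
    rw [← odd_zigzag_iff (a, k), h, odd_zigzag_iff]
  obtain rfl : a = b := by
    clear h
    revert a b
    decide
  simpa [zigzag, (double_injective n).eq_iff] using h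

theorem zigzag_surjective : Function.Surjective (zigzag n) := by
  intro x
  obtain ⟨z, rfl⟩ := ZMod.intCast_surjective x
  obtain ⟨c, rfl | rfl⟩ := Int.even_or_odd' z
  · exact ⟨(0, c), by simp [zigzag_zero, double_intCast]⟩
  · refine ⟨(1, (c + 1 : ℤ)), ?_⟩
    rw [← add_left_inj 1, zigzag_one_add_one, double_intCast]
    push_cast
    ring

theorem oddChordCycle_adj_zigzag_one_zero (k l : ZMod n) :
    (oddChordCycle (2 * n) 3).Adj (zigzag n (1, k)) (zigzag n (0, l)) ↔
      l = k ∨ l = k + 1 ∨ k = l + 1 := by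
  have h_one : zigzag n (1, k) = double n k - 1 := eq_sub_of_add_eq (zigzag_one_add_one k)
  have h_add_two (m : ZMod n) : double n m + 2 = double n (m + 1) := by
    rw [map_add, double_one]
  have h_rung : double n l = zigzag n (1, k) + 1 ↔ l = k := by
    rw [zigzag_one_add_one, (double_injective n).eq_iff]
  have h_down : zigzag n (1, k) = double n l + 1 ↔ k = l + 1 := by
    rw [h_one, sub_eq_iff_eq_add, add_assoc, one_add_one_eq_two, h_add_two,
      (double_injective n).eq_iff]
  have h_up : double n l = zigzag n (1, k) + (3 : ℕ) ↔ l = k + 1 := by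
    rw [← (double_injective n).eq_iff, ← h_add_two, h_one]
    norm_num [sub_add_eq_add_sub, add_sub_assoc]
  rw [oddChordCycle_adj_of_odd ((odd_zigzag_iff _).2 rfl) (by simp [odd_zigzag_iff]),
    zigzag_zero, h_rung, h_down, h_up]
  tauto

theorem oddChordCycle_adj_zigzag (x y : ZMod 2 × ZMod n) :
    (oddChordCycle (2 * n) 3).Adj (zigzag n x) (zigzag n y) ↔ (crossedLadder n).Adj x y := by
  obtain ⟨a, k⟩ := x
  obtain ⟨b, l⟩ := y
  obtain rfl | ⟨rfl, rfl⟩ | ⟨rfl, rfl⟩ : a = b ∨ a = 1 ∧ b = 0 ∨ a = 0 ∧ b = 1 := by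
    revert a b
    decide
  · have not_adj : ¬(oddChordCycle (2 * n) 3).Adj (zigzag n (a, k)) (zigzag n (a, l)) := by
      intro h
      have := odd_iff_not_odd_of_oddChordCycle_adj (dvd_mul_right 2 n) (by decide) h
      simp [odd_zigzag_iff] at this
    simp [not_adj, crossedLadder_adj]
  · simp [oddChordCycle_adj_zigzag_one_zero, crossedLadder_adj]
  · rw [SimpleGraph.adj_comm, (crossedLadder n).adj_comm]
    simp [oddChordCycle_adj_zigzag_one_zero, crossedLadder_adj]

end Zigzag

/-- The zigzag numbering of the crossed ladder, as a graph isomorphism. -/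
noncomputable def crossedLadderIsoOddChordCycle (n : ℕ) :
    crossedLadder n ≃g oddChordCycle (2 * n) 3 where
  toEquiv := Equiv.ofBijective (zigzag n) ⟨zigzag_injective, zigzag_surjective⟩
  map_rel_iff' := oddChordCycle_adj_zigzag _ _

/-- `HTG(1,2n,3)` as a crossed ladder, its rungs being the edges `{2k - 1, 2k}`. -/
noncomputable def htgOneThreeIso (n : ℕ) : HTG 1 (2 * n) 3 ≃g crossedLadder n :=
  (htgOneIso (dvd_mul_right 2 n) 3).trans (crossedLadderIsoOddChordCycle n).symm

/-- The shear `(a, k) ↦ (a + k, k)`, exchanging the two ends of every odd rung. -/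
def parityShear {n : ℕ} (hn : 2 ∣ n) : ZMod 2 × ZMod n ≃+ ZMod 2 × ZMod n where
  toFun x := (x.1 + ZMod.castHom hn (ZMod 2) x.2, x.2)
  invFun x := (x.1 + ZMod.castHom hn (ZMod 2) x.2, x.2)
  left_inv x := by simp [add_assoc, CharTwo.add_self_eq_zero]
  right_inv x := by simp [add_assoc, CharTwo.add_self_eq_zero]
  map_add' x y := by
    simp only [Prod.fst_add, Prod.snd_add, Prod.mk_add_mk, map_add, add_add_add_comm]

/-- The parity shear sends the connection set of the crossed ladder to that of the prism. -/
def crossedLadderIsoPrismGraph {n : ℕ} (hn : Even n) : crossedLadder n ≃g prismGraph n :=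
  addCayleyIso (parityShear hn.two_dvd) <| by
    simp only [Set.image_insert_eq, Set.image_singleton, parityShear, AddEquiv.coe_mk,
      Equiv.coe_fn_mk, map_zero, map_neg, map_one, CharTwo.neg_eq, CharTwo.add_self_eq_zero,
      add_zero]

/-- The Chinese remainder isomorphism `ZMod 2 × ZMod n ≃ ZMod (2 * n)` sends `(1, 0)` to `n` and
`(1, ±1)` to `±1`. -/
def crossedLadderIsoMobiusLadder {n : ℕ} (hn : Odd n) : crossedLadder n ≃g mobiusLadder n :=
  let e := ZMod.chineseRemainder (Nat.coprime_two_left.2 hn)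
  addCayleyIso e.symm.toAddEquiv <| by
    have h_rung : e.symm (1, 0) = n := by
      rw [e.symm_apply_eq, map_natCast]
      ext <;> simp [hn.natCast_zmod_two]
    have h_succ : e.symm (1, 1) = 1 := map_one e.symm
    have h_pred : e.symm (1, -1) = -1 := by
      rw [e.symm_apply_eq, map_neg, map_one]
      rfl
    rw [Set.image_insert_eq, Set.image_pair]
    change {e.symm (1, 0), e.symm (1, 1), e.symm (1, -1)} = _
    rw [h_rung, h_succ, h_pred, Set.insert_comm, Set.pair_comm]

theorem prismGraph_adj {n : ℕ} {a b : ZMod 2} {k l : ZMod n} :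
    (prismGraph n).Adj (a, k) (b, l) ↔
      a ≠ b ∧ k = l ∨ a = b ∧ k ≠ l ∧ (l = k + 1 ∨ k = l + 1) := by
  rw [prismGraph, addCayley_adj_of_neg_mem (by simp [CharTwo.neg_eq])]
  simp only [Prod.neg_mk, Prod.mk_add_mk, Set.mem_insert_iff, Set.mem_singleton_iff, Prod.mk.injEq,
    neg_add_zmod_two_eq_one_iff, neg_add_eq_zero]
  grind

theorem htg_two_zero_eq_prismGraph (n : ℕ) : HTG 2 n 0 = prismGraph n := by
  ext ⟨a, k⟩ ⟨b, l⟩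
  rw [prismGraph_adj]
  -- Rungs with `k` odd come from the second clause of `HTG`, those with `k` even from the third.
  simp only [HTG, SimpleGraph.fromRel_adj, eq_sub_iff_add_eq, Nat.cast_zero, add_zero]
  rcases zmod_two_eq_zero_or_one a with rfl | rfl <;>
    rcases zmod_two_eq_zero_or_one b with rfl | rfl <;>
    grind [ZMod.val_zero, ZMod.val_one]

theorem oddChordCycle_self_eq_mobiusLadder {n : ℕ} (hn : Odd n) :
    oddChordCycle (2 * n) n = mobiusLadder n := by
  have neg_natCast : -(n : ZMod (2 * n)) = n :=
    neg_eq_of_add_eq_zero_left (by rw [← two_mul, two_mul_natCast_self])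
  have odd_add_n := odd_add_natCast_iff (dvd_mul_right 2 n) hn
  ext u v
  rw [mobiusLadder, addCayley_adj_of_neg_mem (by simp [neg_natCast])]
  simp only [oddChordCycle, SimpleGraph.fromRel_adj, Set.mem_insert_iff, Set.mem_singleton_iff,
    neg_add_eq_iff_eq_add]
  grind

/-- (i) For even `n ≥ 6`, `HTG(2,n,0)` and `HTG(1,2n,3)` are both isomorphic to the prism
`Pr(n)`; (ii) for odd `n ≥ 3`, `HTG(1,2n,n)` and `HTG(1,2n,3)` are both isomorphic to the
Möbius ladder `Ml(n)`. -/
theorem statement18 :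
    (∀ n : ℕ, 6 ≤ n → Even n →
      Nonempty (HTG 2 n 0 ≃g prismGraph n) ∧
      Nonempty (HTG 1 (2 * n) 3 ≃g prismGraph n)) ∧
    (∀ n : ℕ, 3 ≤ n → Odd n →
      Nonempty (HTG 1 (2 * n) n ≃g mobiusLadder n) ∧
      Nonempty (HTG 1 (2 * n) 3 ≃g mobiusLadder n)) := by
  refine ⟨fun n _ hn => ⟨?_, ?_⟩, fun n _ hn => ⟨?_, ?_⟩⟩
  · rw [htg_two_zero_eq_prismGraph]
    exact ⟨.refl⟩
  · exact ⟨(htgOneThreeIso n).trans (crossedLadderIsoPrismGraph hn)⟩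
  · rw [← oddChordCycle_self_eq_mobiusLadder hn]
    exact ⟨htgOneIso (dvd_mul_right 2 n) n⟩
  · exact ⟨(htgOneThreeIso n).trans (crossedLadderIsoMobiusLadder hn)⟩

end HTGPaper
end

section
/- Let m and n be positive integers with n ≥ 4 even, let 0 ≤ ℓ ≤ n−1 be an integer of the same parity as m, and let Γ = HTG(m,n,ℓ) have girth 6. If some automorphism of Γ is not color permuting, then Γ is 2-arc-transitive and is isomorphic to the Heawood graph, the Pappus graph, or the Möbius–Kantor graph. -/
namespace HTGPaper

/-! The graph is the Haar graph of the triple `0, x, y` in the abelian group `⟨x, y⟩`: the two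
copies of the group are the cosets of `⟨x, y⟩`, and the three colors are the three elements of
the triple. Girth greater than four makes the triple a Sidon family, and all walks with three
distinct colors lie on hexagons.

An automorphism that does not permute the colors permutes them differently at the ends of some
edge. The two permutations differ by a transposition, so the automorphism maps walks with three
distinct colors to walks with colors `c, k, c`, for one color `k` and both `c ≠ k`. Hence these
lie on hexagons too, and each hexagon is a linear relation in the triple. Up to affine
equivalence the relations leave the affine basis of the plane over `ℤ/3` (Pappus) and the
triples `0, 1, -2` in `ℤ/N` with `N = 7` (Heawood), `N = 8` (Möbius–Kantor) and `N = 9`. For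
`N = 9` the walks with colors `2, 0, 2` are the only ones that do not lie on hexagons; every
automorphism preserves them and so preserves the colors. -/

section Graphs

variable {V W ι : Type*} {Γ : SimpleGraph V} {Δ : SimpleGraph W}

theorem forall_of_preconnected (hΓ : Γ.Preconnected) {P : V → Prop} {v : V} (hv : P v)
    (hadj : ∀ ⦃u w⦄, Γ.Adj u w → P u → P w) (w : V) : P w := by
  obtain ⟨p⟩ := hΓ v w
  induction p with
  | nil => exact hv
  | cons h _ ih => exact ih (hadj h hv)

theorem eq_or_eq_of_four_lt_girth (hΓ : 4 < Γ.girth) {a b c d : V} (hab : Γ.Adj a b)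
    (hbc : Γ.Adj b c) (hcd : Γ.Adj c d) (hda : Γ.Adj d a) : a = c ∨ b = d := by
  by_contra! hne
  let p : Γ.Walk a a := .cons hab (.cons hbc (.cons hcd (.cons hda .nil)))
  have hp : p.IsCycle := by
    simp only [p, SimpleGraph.Walk.cons_isCycle_iff, SimpleGraph.Walk.isPath_def,
      SimpleGraph.Walk.support_cons, SimpleGraph.Walk.support_nil, SimpleGraph.Walk.edges_cons,
      SimpleGraph.Walk.edges_nil, List.nodup_cons, List.mem_cons, List.not_mem_nil, Sym2.eq_iff]
    have := hab.ne
    have := hbc.ne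
    have := hcd.ne
    have := hda.ne
    grind
  have : Γ.girth ≤ 4 := Γ.girth_le_length hp
  omega

/-- The automorphism group acts transitively on the vertices. -/
def IsVertexTransitive (Γ : SimpleGraph V) : Prop :=
  ∀ v w, ∃ f : Γ ≃g Γ, f v = w

theorem IsVertexTransitive.of_iso (e : Γ ≃g Δ) (h : IsVertexTransitive Δ) :
    IsVertexTransitive Γ := by
  intro v w
  obtain ⟨f, hf⟩ := h (e v) (e w)
  exact ⟨(e.trans f).trans e.symm, by simp [hf]⟩

theorem IsSArc.map {s : ℕ} {p : Fin (s + 1) → V} (h : IsSArc Γ s p) (e : Γ ≃g Δ) :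
    IsSArc Δ s (e ∘ p) :=
  ⟨fun i => e.map_adj_iff.2 (h.1 i), fun i j hij => e.injective.ne (h.2 i j hij)⟩

theorem IsSArcTransitive.of_iso {s : ℕ} (e : Γ ≃g Δ) (h : IsSArcTransitive Δ s) :
    IsSArcTransitive Γ s := by
  intro p q hp hq
  obtain ⟨f, hf⟩ := h _ _ (hp.map e) (hq.map e)
  exact ⟨(e.trans f).trans e.symm, fun i => e.symm_apply_eq.2 (hf i)⟩

/-- The permutations of the neighbours `nb i` of a vertex `v` that are induced by automorphisms
of `Γ` fixing `v`, as permutations of the labels `i`. -/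
def localSymmetries (Γ : SimpleGraph V) (v : V) (nb : ι → V) :
    Subgroup (Equiv.Perm ι) where
  carrier := {σ | ∃ f : Γ ≃g Γ, f v = v ∧ ∀ i, f (nb i) = nb (σ i)}
  one_mem' := ⟨.refl, rfl, fun _ => rfl⟩
  mul_mem' := by
    rintro σ τ ⟨f, hfv, hf⟩ ⟨g, hgv, hg⟩
    exact ⟨g.trans f, by simp [hgv, hfv], fun i => by simp [hg, hf]⟩
  inv_mem' := by
    rintro σ ⟨f, hfv, hf⟩
    refine ⟨f.symm, f.symm_apply_eq.2 hfv.symm, fun i => f.symm_apply_eq.2 ?_⟩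
    simp [hf]

theorem IsVertexTransitive.isSArcTransitive_two {v : V} {nb : ι → V}
    (hΓ : IsVertexTransitive Γ) (hnb : ∀ w, Γ.Adj v w → w ∈ Set.range nb)
    (hloc : localSymmetries Γ v nb = ⊤) : IsSArcTransitive Γ 2 := by
  have to_center : ∀ p, IsSArc Γ 2 p →
      ∃ (f : Γ ≃g Γ) (i j : ι), i ≠ j ∧ f (p 0) = nb i ∧ f (p 1) = v ∧ f (p 2) = nb j := by
    intro p hp
    obtain ⟨f, hf⟩ := hΓ (p 1) v
    obtain ⟨i, hi⟩ := hnb _ (hf ▸ f.map_adj_iff.2 (hp.1 0).symm)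
    obtain ⟨j, hj⟩ := hnb _ (hf ▸ f.map_adj_iff.2 (hp.1 1))
    refine ⟨f, i, j, ?_, hi.symm, hf, hj.symm⟩
    rintro rfl
    exact hp.2 0 2 rfl (f.injective (hi.symm.trans hj))
  intro p q hp hq
  obtain ⟨f, i, j, hij, hf0, hf1, hf2⟩ := to_center p hp
  obtain ⟨g, k, l, hkl, hg0, hg1, hg2⟩ := to_center q hq
  obtain ⟨σ, hσi, hσj⟩ :=
    MulAction.is_two_pretransitive_iff.1 (Equiv.Perm.isMultiplyPretransitive ι 2) hij hkl
  obtain ⟨φ, hφv, hφ⟩ : σ ∈ localSymmetries Γ v nb := hloc ▸ Subgroup.mem_top σ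
  rw [Equiv.Perm.smul_def] at hσi hσj
  refine ⟨(f.trans φ).trans g.symm, Fin.forall_fin_succ.2 ⟨?_, Fin.forall_fin_two.2 ⟨?_, ?_⟩⟩⟩
  · exact g.symm_apply_eq.2 (by simp [hf0, hφ, hσi, hg0])
  · exact g.symm_apply_eq.2 (by simp [hf1, hφv, hg1])
  · exact g.symm_apply_eq.2 (by simp [hf2, hφ, hσj, hg2])

theorem subgroup_perm_fin_three_eq_top {K : Subgroup (Equiv.Perm (Fin 3))}
    (h01 : Equiv.swap 0 1 ∈ K) (h12 : Equiv.swap 1 2 ∈ K) : K = ⊤ := by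
  have htop : ⊤ ≤ K.toSubmonoid := by
    rw [← Equiv.Perm.mclosure_swap_castSucc_succ, Submonoid.closure_le]
    rintro _ ⟨i, rfl⟩
    fin_cases i
    exacts [h01, h12]
  exact eq_top_iff.2 fun σ _ => htop (Submonoid.mem_top σ)

end Graphs

section EdgeColorings

variable {V W ι : Type*} {nb : ι → V → V} {nb' : ι → W → W}

/-- In a graph whose edges of color `i` join each vertex `v` to `nb i v`, the map `f` sends all
edges of one color to edges of one color. -/
def PermutesColors (nb : ι → V → V) (f : V → V) : Prop :=
  ∃ π : ι → ι, ∀ v i, f (nb i v) = nb (π i) (f v)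

theorem PermutesColors.of_conj {e : V ≃ W} {σ : Equiv.Perm ι}
    (he : ∀ v i, e (nb i v) = nb' (σ i) (e v)) {f : V → V}
    (hf : PermutesColors nb' (e ∘ f ∘ e.symm)) : PermutesColors nb f := by
  obtain ⟨π, hπ⟩ := hf
  refine ⟨σ.symm ∘ π ∘ σ, fun v i => e.injective ?_⟩
  have h := hπ (e v) (σ i)
  simp only [← he, Function.comp_apply, Equiv.symm_apply_apply] at h
  simp [h, he]

/-- The graph isomorphism given by a bijection of the vertices that permutes the edge colors. -/
def isoOfPermutesColors {Γ : SimpleGraph V} {Δ : SimpleGraph W}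
    (hΓ : ∀ v w, Γ.Adj v w ↔ ∃ i, nb i v = w) (hΔ : ∀ v w, Δ.Adj v w ↔ ∃ i, nb' i v = w)
    (e : V ≃ W) (σ : Equiv.Perm ι) (he : ∀ v i, e (nb i v) = nb' (σ i) (e v)) : Γ ≃g Δ where
  toEquiv := e
  map_rel_iff' {v w} := by
    rw [hΔ, σ.surjective.exists]
    simp only [hΓ, ← he, e.injective.eq_iff]

end EdgeColorings

section HaarGraphs

variable {A B ι : Type*} [AddCommGroup A] [AddCommGroup B] {x : ι → A} {y : ι → B}

/-- The neighbor of color `i` in the Haar graph of `x`. -/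
def haarStep (x : ι → A) (i : ι) : A × Bool → A × Bool
  | (a, false) => (a + x i, true)
  | (a, true) => (a - x i, false)

theorem haarStep_eq_haarStep_iff {i j : ι} {v : A × Bool} :
    haarStep x i v = haarStep x j v ↔ x i = x j := by
  rcases v with ⟨a, _ | _⟩ <;> simp [haarStep]

theorem haarStep_haarStep_eq_iff {i j : ι} {v : A × Bool} :
    haarStep x j (haarStep x i v) = v ↔ x i = x j := by
  rcases v with ⟨a, _ | _⟩ <;> simp only [haarStep, Prod.mk.injEq, and_true]
  · rw [sub_eq_iff_eq_add, add_right_inj]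
  · rw [sub_add, sub_eq_self, sub_eq_zero]

theorem haarStep_haarStep (i : ι) (v : A × Bool) : haarStep x i (haarStep x i v) = v :=
  haarStep_haarStep_eq_iff.2 rfl

theorem haarStep_closed_hexagon_iff {i j k l p q : ι} {v : A × Bool} :
    haarStep x q (haarStep x p (haarStep x l (haarStep x k (haarStep x j v)))) = haarStep x i v ↔
      x i + x k + x p = x j + x l + x q := by
  rcases v with ⟨a, _ | _⟩ <;> simp only [haarStep, Prod.mk.injEq, and_true] <;>
    constructor <;> intro h
  · linear_combination (norm := module) -h
  · linear_combination (norm := module) -h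
  · linear_combination (norm := module) h
  · linear_combination (norm := module) h

/-- The Haar graph, or bi-Cayley graph, of a family `x` in an abelian group `A`: the bipartite
graph on two copies of `A` in which `a` in the first copy is joined to each `a + x i` in the
second one. -/
def haarGraph (x : ι → A) : SimpleGraph (A × Bool) where
  Adj v w := ∃ i, haarStep x i v = w
  symm := ⟨by
    rintro v _ ⟨i, rfl⟩
    exact ⟨i, haarStep_haarStep i v⟩⟩
  loopless := ⟨by
    rintro ⟨a, _ | _⟩ ⟨i, h⟩ <;> simp [haarStep] at h⟩

theorem haarGraph_adj {v w : A × Bool} : (haarGraph x).Adj v w ↔ ∃ i, haarStep x i v = w :=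
  Iff.rfl

theorem haarGraph_adj_haarStep (i : ι) (v : A × Bool) :
    (haarGraph x).Adj v (haarStep x i v) :=
  ⟨i, rfl⟩

/-- An equivalence of families in abelian groups up to relabeling and an affine bijection. -/
structure AffineFamilyEquiv (x : ι → A) (y : ι → B) where
  addEquiv : A ≃+ B
  perm : Equiv.Perm ι
  shift : B
  apply_perm : ∀ i, y (perm i) = addEquiv (x i) + shift

namespace AffineFamilyEquiv

/-- The inverse affine bijection. -/
def symm (E : AffineFamilyEquiv x y) : AffineFamilyEquiv y x where
  addEquiv := E.addEquiv.symm
  perm := E.perm.symm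
  shift := -E.addEquiv.symm E.shift
  apply_perm i := by
    obtain ⟨i, rfl⟩ := E.perm.surjective i
    simp [E.apply_perm]

/-- The map that an affine equivalence of families induces on the vertices of Haar graphs. -/
def vertexEquiv (E : AffineFamilyEquiv x y) : A × Bool ≃ B × Bool where
  toFun v := (E.addEquiv v.1 + if v.2 then E.shift else 0, v.2)
  invFun w := (E.addEquiv.symm (w.1 - if w.2 then E.shift else 0), w.2)
  left_inv v := by simp
  right_inv w := by simp

theorem vertexEquiv_haarStep (E : AffineFamilyEquiv x y) (v : A × Bool) (i : ι) :
    E.vertexEquiv (haarStep x i v) = haarStep y (E.perm i) (E.vertexEquiv v) := by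
  rcases v with ⟨a, _ | _⟩ <;> simp [vertexEquiv, haarStep, E.apply_perm, add_assoc]

/-- The isomorphism of Haar graphs that comes from an affine equivalence of families. -/
def haarIso (E : AffineFamilyEquiv x y) : haarGraph x ≃g haarGraph y :=
  isoOfPermutesColors (fun _ _ => haarGraph_adj) (fun _ _ => haarGraph_adj) E.vertexEquiv E.perm
    E.vertexEquiv_haarStep

end AffineFamilyEquiv

theorem haarGraph_isVertexTransitive (x : ι → A) : IsVertexTransitive (haarGraph x) := by
  have automorphism (e : A × Bool ≃ A × Bool)
      (he : ∀ v i, e (haarStep x i v) = haarStep x i (e v)) : ∃ f : haarGraph x ≃g haarGraph x,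
        ⇑f = e :=
    ⟨isoOfPermutesColors (fun _ _ => haarGraph_adj) (fun _ _ => haarGraph_adj) e (.refl ι) he, rfl⟩
  rintro ⟨a, r⟩ ⟨b, s⟩
  by_cases hrs : r = s
  · obtain ⟨f, hf⟩ := automorphism ((Equiv.addRight (b - a)).prodCongr (.refl Bool)) (by
      rintro ⟨c, _ | _⟩ i <;> simp only [haarStep, Equiv.prodCongr_apply, Equiv.coe_addRight,
        Equiv.coe_refl, Prod.map_apply, id_eq, Prod.mk.injEq, and_true] <;> abel)
    exact ⟨f, by simp [hf, hrs]⟩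
  · obtain ⟨f, hf⟩ := automorphism ((Equiv.subLeft (a + b)).prodCongr Equiv.boolNot) (by
      rintro ⟨c, _ | _⟩ i <;> simp only [haarStep, Equiv.prodCongr_apply, Equiv.subLeft_apply,
        Equiv.boolNot_apply, Bool.not_true, Bool.not_false, Prod.map_apply, Prod.mk.injEq,
        and_true] <;> abel)
    exact ⟨f, by simpa [hf, eq_comm (a := !r), Bool.eq_not] using fun h => hrs h.symm⟩

/-- The sums `x i + x j` determine the unordered pairs of labels `i`, `j`. -/
def IsSidon (x : ι → A) : Prop :=
  ∀ ⦃i j k l⦄, x i + x j = x k + x l → i = k ∨ i = l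

theorem IsSidon.injective (hx : IsSidon x) : Function.Injective x := by
  intro i j hij
  simpa using hx (congrArg₂ (· + ·) hij hij)

theorem IsSidon.of_affineFamilyEquiv (E : AffineFamilyEquiv x y) (hx : IsSidon x) :
    IsSidon y := by
  intro i j k l h
  obtain ⟨i, rfl⟩ := E.perm.surjective i
  obtain ⟨j, rfl⟩ := E.perm.surjective j
  obtain ⟨k, rfl⟩ := E.perm.surjective k
  obtain ⟨l, rfl⟩ := E.perm.surjective l
  simp only [E.apply_perm, E.perm.injective.eq_iff] at h ⊢
  rw [add_add_add_comm, add_add_add_comm (E.addEquiv (x k)), add_left_inj, ← map_add, ← map_add,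
    E.addEquiv.injective.eq_iff] at h
  exact hx h

theorem isSidon_of_four_lt_girth (hx : Function.Injective x) (hΓ : 4 < (haarGraph x).girth) :
    IsSidon x := by
  intro i j k l h
  have hclosed : haarStep x l (haarStep x j (haarStep x k (haarStep x i (0, false)))) =
      (0, false) := by
    simp only [haarStep, Prod.mk.injEq, and_true]
    linear_combination (norm := module) h
  rcases eq_or_eq_of_four_lt_girth hΓ (haarGraph_adj_haarStep i (0, false))
    (haarGraph_adj_haarStep k _) (haarGraph_adj_haarStep j _) ⟨l, hclosed⟩ with h13 | h24
  · exact .inl (hx (haarStep_haarStep_eq_iff.1 h13.symm))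
  · refine .inr (hx (haarStep_eq_haarStep_iff (v := (0, false)).1 ?_))
    rw [h24, ← haarStep_haarStep l (haarStep x j _), hclosed]

end HaarGraphs

section Hexagons

theorem eq_or_eq_or_eq_of_pairwise_ne : ∀ {i j k : Fin 3}, i ≠ j → j ≠ k → i ≠ k → ∀ l,
    l = i ∨ l = j ∨ l = k := by
  decide

/-- The walk `v₀ v₁ v₂ v₃` extends to a closed walk of length six that does not turn back. In the
Haar graph of a Sidon family such a closed walk is a `6`-cycle. -/
def OnHexagon {V : Type*} (Γ : SimpleGraph V) (v₀ v₁ v₂ v₃ : V) : Prop :=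
  ∃ v₄ v₅, Γ.Adj v₃ v₄ ∧ Γ.Adj v₄ v₅ ∧ Γ.Adj v₅ v₀ ∧ v₄ ≠ v₂ ∧ v₅ ≠ v₃ ∧ v₀ ≠ v₄ ∧ v₁ ≠ v₅

theorem onHexagon_map_iff {V W : Type*} {Γ : SimpleGraph V} {Δ : SimpleGraph W} (f : Γ ≃g Δ)
    {v₀ v₁ v₂ v₃ : V} : OnHexagon Δ (f v₀) (f v₁) (f v₂) (f v₃) ↔ OnHexagon Γ v₀ v₁ v₂ v₃ := by
  simp only [OnHexagon, f.surjective.exists, f.map_adj_iff, f.injective.ne_iff]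

variable {A ι : Type*} [AddCommGroup A] {x : ι → A}

/-- The relation in `A` saying that the walks with colors `i, j, k` in the Haar graph of `x` lie
on hexagons. -/
def IsHexagonal (x : ι → A) (i j k : ι) : Prop :=
  ∃ l p q, l ≠ k ∧ p ≠ l ∧ q ≠ p ∧ q ≠ i ∧ x i + x k + x p = x j + x l + x q

theorem onHexagon_haarStep_iff (hx : Function.Injective x) (v : A × Bool) (i j k : ι) :
    OnHexagon (haarGraph x) (haarStep x i v) v (haarStep x j v) (haarStep x k (haarStep x j v)) ↔
      IsHexagonal x i j k := by
  simp only [OnHexagon, IsHexagonal, haarGraph_adj]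
  constructor
  · rintro ⟨_, _, ⟨l, rfl⟩, ⟨p, rfl⟩, ⟨q, hq⟩, hlk, hpl, hqp, hqi⟩
    refine ⟨l, p, q, ?_, ?_, ?_, ?_, haarStep_closed_hexagon_iff.1 hq⟩
    · rintro rfl; exact hlk (haarStep_haarStep _ _)
    · rintro rfl; exact hpl (haarStep_haarStep _ _)
    · rintro rfl; exact hqp (hq ▸ haarStep_haarStep _ _)
    · rintro rfl
      exact hqi (by simpa only [haarStep_haarStep] using congrArg (haarStep x q) hq.symm)
  · rintro ⟨l, p, q, hlk, hpl, hqp, hqi, h⟩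
    have hclosed := haarStep_closed_hexagon_iff (v := v).2 h
    refine ⟨_, _, ⟨l, rfl⟩, ⟨p, rfl⟩, ⟨q, hclosed⟩, ?_, ?_, ?_, ?_⟩
    · exact fun h => hlk (hx (haarStep_haarStep_eq_iff.1 h)).symm
    · exact fun h => hpl (hx (haarStep_haarStep_eq_iff.1 h)).symm
    · exact fun h => hqp (hx (haarStep_haarStep_eq_iff.1 (hclosed.trans h))).symm
    · intro h
      rw [← h] at hclosed
      exact hqi (hx (haarStep_eq_haarStep_iff.1 hclosed))

/-- Following the colors `i, j, k` twice closes up. -/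
theorem isHexagonal_of_pairwise_ne {i j k : ι} (hij : i ≠ j) (hjk : j ≠ k) (hik : i ≠ k) :
    IsHexagonal x i j k :=
  ⟨i, j, k, hik, hij.symm, hjk.symm, hik.symm, by abel⟩

theorem IsHexagonal.relation {x : Fin 3 → A} (hx : IsSidon x) {c k d : Fin 3} (hck : c ≠ k)
    (hkd : k ≠ d) (hcd : c ≠ d) (h : IsHexagonal x c k c) :
    3 • x c = 3 • x k ∨ 3 • x k = 2 • x c + x d ∨ 3 • x c = 2 • x k + x d ∨
      3 • x c = x k + 2 • x d := by
  obtain ⟨l, p, q, hlc, hpl, hqp, hqc, h⟩ := h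
  have hl : l = k ∨ l = d := (eq_or_eq_or_eq_of_pairwise_ne hck hkd hcd l).resolve_left hlc
  have hq : q = k ∨ q = d := (eq_or_eq_or_eq_of_pairwise_ne hck hkd hcd q).resolve_left hqc
  have hp := eq_or_eq_or_eq_of_pairwise_ne hck hkd hcd p
  rcases hl with rfl | rfl <;> rcases hq with rfl | rfl
  · rcases hp with rfl | rfl | rfl
    · exact .inl (by linear_combination (norm := module) h)
    · exact absurd rfl hpl
    · exact .inr (.inl (by linear_combination (norm := module) -h))
  · obtain rfl := hp.resolve_right (by tauto)
    exact .inr (.inr (.inl (by linear_combination (norm := module) h)))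
  · obtain rfl := hp.resolve_right (by tauto)
    exact .inr (.inr (.inl (by linear_combination (norm := module) h)))
  · rcases hp with rfl | rfl | rfl
    · exact .inr (.inr (.inr (by linear_combination (norm := module) h)))
    · have hcq : x c + x c = x q + x q := by linear_combination (norm := module) h
      exact absurd (or_self_iff.1 (hx hcq)) hcd
    · exact absurd rfl hpl

end Hexagons

section LocalAction

theorem perm_fin_three_ext : ∀ {σ τ : Equiv.Perm (Fin 3)} {i j : Fin 3}, i ≠ j → σ i = τ i →
    σ j = τ j → σ = τ := by
  decide

theorem eq_or_eq_or_eq_of_not_injective {α : Type*} {x : Fin 3 → α}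
    (hx : ¬ Function.Injective x) (i j k : Fin 3) : x i = x j ∨ x i = x k ∨ x j = x k := by
  by_contra! hne
  refine hx fun a b hab => ?_
  have hcover := eq_or_eq_or_eq_of_pairwise_ne (ne_of_apply_ne x hne.1) (ne_of_apply_ne x hne.2.2)
    (ne_of_apply_ne x hne.2.1)
  have ha := hcover a
  have hb := hcover b
  grind

variable {A ι : Type*} [AddCommGroup A] {x : ι → A} {f : A × Bool → A × Bool}
  {τ : A × Bool → ι → ι}

/-- At each vertex `v` the map `f` sends the edge of color `i` to the edge of color `τ v i`. -/
def IsLocalAction (x : ι → A) (f : A × Bool → A × Bool) (τ : A × Bool → ι → ι) : Prop :=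
  ∀ v i, f (haarStep x i v) = haarStep x (τ v i) (f v)

theorem exists_isLocalAction (f : haarGraph x ≃g haarGraph x) : ∃ τ, IsLocalAction x f τ := by
  have h : ∀ v i, ∃ j, f (haarStep x i v) = haarStep x j (f v) := fun v i =>
    (f.map_adj_iff.2 (haarGraph_adj_haarStep i v)).imp fun _ hj => hj.symm
  choose τ hτ using h
  exact ⟨τ, hτ⟩

namespace IsLocalAction

theorem apply_eq_apply_iff (hτ : IsLocalAction x f τ) (hf : Function.Injective f)
    (v : A × Bool) {i j : ι} : x (τ v i) = x (τ v j) ↔ x i = x j := by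
  rw [← haarStep_eq_haarStep_iff (v := f v), ← hτ, ← hτ, hf.eq_iff, haarStep_eq_haarStep_iff]

theorem apply_haarStep_self (hτ : IsLocalAction x f τ) (v : A × Bool) (i : ι) :
    x (τ (haarStep x i v) i) = x (τ v i) := by
  rw [eq_comm, ← haarStep_haarStep_eq_iff (v := f v), ← hτ, ← hτ, haarStep_haarStep]

theorem permutesColors_of_locally_constant (hτ : IsLocalAction x f τ)
    (hconn : (haarGraph x).Preconnected)
    (h : ∀ v i j, x (τ (haarStep x i v) j) = x (τ v j)) : PermutesColors (haarStep x) f := by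
  have hconst : ∀ v j, x (τ v j) = x (τ 0 j) :=
    forall_of_preconnected hconn (P := fun v => ∀ j, x (τ v j) = x (τ 0 j)) (fun _ => rfl) <| by
      rintro u _ ⟨i, rfl⟩ hu j
      rw [h, hu]
  exact ⟨τ 0, fun v j => (hτ v j).trans (haarStep_eq_haarStep_iff.2 (hconst v j))⟩

end IsLocalAction

theorem permutesColors_of_not_injective {x : Fin 3 → A} (hx : ¬ Function.Injective x)
    (hconn : (haarGraph x).Preconnected) (f : haarGraph x ≃g haarGraph x) :
    PermutesColors (haarStep x) f := by
  obtain ⟨τ, hτ⟩ := exists_isLocalAction f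
  refine hτ.permutesColors_of_locally_constant hconn fun v i j => ?_
  have hself := hτ.apply_haarStep_self v i
  by_cases hij : x i = x j
  · rw [← (hτ.apply_eq_apply_iff f.injective v).2 hij, ← hself,
      (hτ.apply_eq_apply_iff f.injective _).2 hij]
  · have hv := mt (hτ.apply_eq_apply_iff f.injective v).1 hij
    have hw := mt (hτ.apply_eq_apply_iff f.injective (haarStep x i v)).1 hij
    rw [hself] at hw
    have := eq_or_eq_or_eq_of_not_injective hx (τ v i) (τ (haarStep x i v) j) (τ v j)
    tauto

theorem exists_perm_isLocalAction [Finite ι] (hx : Function.Injective x)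
    (f : haarGraph x ≃g haarGraph x) :
    ∃ τ : A × Bool → Equiv.Perm ι, IsLocalAction x f fun v => τ v := by
  obtain ⟨τ, hτ⟩ := exists_isLocalAction f
  have hinj (v) : Function.Injective (τ v) := fun i j hij =>
    hx ((hτ.apply_eq_apply_iff f.injective v).1 (congrArg x hij))
  exact ⟨fun v => .ofBijective (τ v) (Finite.injective_iff_bijective.1 (hinj v)), hτ⟩

theorem IsLocalAction.isHexagonal_iff {f : haarGraph x ≃g haarGraph x}
    (hτ : IsLocalAction x f τ) (hx : Function.Injective x) (v : A × Bool) (i j k : ι) :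
    IsHexagonal x (τ v i) (τ v j) (τ (haarStep x j v) k) ↔ IsHexagonal x i j k := by
  rw [← onHexagon_haarStep_iff hx (f v), ← hτ, ← hτ, ← hτ, onHexagon_map_iff,
    onHexagon_haarStep_iff hx]

variable {x : Fin 3 → A}

/-- Where the local action changes along an edge of color `e`, it changes by a transposition
fixing the color `k` of the image edge; so for `c ≠ k` a walk with three distinct colors and
middle color `e` is mapped to one with colors `c, k, c`. -/
theorem exists_forall_isHexagonal (hx : Function.Injective x) (hconn : (haarGraph x).Preconnected)
    (f : haarGraph x ≃g haarGraph x) (hf : ¬ PermutesColors (haarStep x) f) :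
    ∃ k, ∀ c, c ≠ k → IsHexagonal x c k c := by
  obtain ⟨τ, hτ⟩ := exists_perm_isLocalAction hx f
  obtain ⟨v, e, hne⟩ : ∃ v e, τ (haarStep x e v) ≠ τ v := by
    by_contra! h
    exact hf (hτ.permutesColors_of_locally_constant hconn fun v i j => by simp only [h])
  have hself : τ (haarStep x e v) e = τ v e := hx (hτ.apply_haarStep_self v e)
  refine ⟨τ v e, fun c hc => ?_⟩
  have hvc : (τ v).symm c ≠ e := mt (Equiv.symm_apply_eq _).1 hc
  have hwc : (τ (haarStep x e v)).symm c ≠ e := mt (Equiv.symm_apply_eq _).1 (hself ▸ hc)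
  have hvw : (τ v).symm c ≠ (τ (haarStep x e v)).symm c := by
    intro h
    refine hne (perm_fin_three_ext hvc ?_ hself)
    rw [Equiv.apply_symm_apply, h, Equiv.apply_symm_apply]
  simpa using (hτ.isHexagonal_iff hx v _ _ _).2 (isHexagonal_of_pairwise_ne hvc hwc.symm hvw)

theorem permutesColors_of_unique_not_isHexagonal (hx : Function.Injective x) {c k : Fin 3}
    (hck : c ≠ k) (hnot : ¬ IsHexagonal x c k c)
    (hunique : ∀ c' k', c' ≠ k' → ¬ IsHexagonal x c' k' c' → c' = c ∧ k' = k)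
    (f : haarGraph x ≃g haarGraph x) : PermutesColors (haarStep x) f := by
  obtain ⟨τ, hτ⟩ := exists_perm_isLocalAction hx f
  suffices hone : ∀ v, τ v = 1 from ⟨id, fun v i => (hτ v i).trans (by simp [hone])⟩
  intro v
  have himage := mt (hτ.isHexagonal_iff hx v c k c).1 hnot
  have hk : τ v c ≠ τ v k := (τ v).injective.ne hck
  have hk' : τ v k ≠ τ (haarStep x k v) c := by
    rw [← hx (hτ.apply_haarStep_self v k)]
    exact (τ _).injective.ne hck.symm
  have hc : τ (haarStep x k v) c = τ v c := by
    by_contra h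
    exact himage (isHexagonal_of_pairwise_ne hk hk' (Ne.symm h))
  rw [hc] at himage
  obtain ⟨hc1, hk1⟩ := hunique _ _ hk himage
  exact perm_fin_three_ext hck hc1 hk1

end LocalAction

section NamedGraphs

open Equiv (swap)

instance (k : ℕ) (f : ℕ → ℤ) : DecidableRel (lcfGraph k f).Adj :=
  inferInstanceAs (DecidableRel (SimpleGraph.fromRel _).Adj)

instance : DecidableRel heawood.Adj :=
  inferInstanceAs (DecidableRel (lcfGraph _ _).Adj)

instance : DecidableRel mobiusKantor.Adj :=
  inferInstanceAs (DecidableRel (lcfGraph _ _).Adj)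

instance : DecidableRel pappus.Adj :=
  inferInstanceAs (DecidableRel (lcfGraph _ _).Adj)

instance {A ι : Type*} [AddCommGroup A] [DecidableEq A] [Fintype ι] (x : ι → A) :
    DecidableRel (haarGraph x).Adj :=
  fun v w => inferInstanceAs (Decidable (∃ i, haarStep x i v = w))

/-- The triple `0, 1, -2` in `ℤ/N`, whose Haar graph is the cubic graph with LCF notation
`[5,-5]^N`. -/
def cyclicTriple (N : ℕ) : Fin 3 → ZMod N :=
  ![0, 1, -2]

/-- An affine basis of the plane over `ℤ/3`. Its Haar graph is the Pappus graph. -/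
def planeTriple : Fin 3 → ZMod 3 × ZMod 3 :=
  ![0, (1, 0), (0, 1)]

/-- The vertex of the Haar graph of `cyclicTriple N` at position `i` on the Hamiltonian cycle of the
LCF notation `[5,-5]^N`. -/
def cyclicVertex (N : ℕ) {k : ℕ} (i : ZMod k) : ZMod N × Bool :=
  (-(i.val / 2 : ℕ), decide (i.val % 2 = 1))

/-- The vertex of the Haar graph of `planeTriple` at position `i` on the Hamiltonian cycle of the
LCF notation of the Pappus graph. -/
def planeVertex (i : ZMod 18) : (ZMod 3 × ZMod 3) × Bool :=
  (((i.val / 6 : ℕ) - (i.val / 2 : ℕ), -(i.val / 6 : ℕ)), decide (i.val % 2 = 1))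

/-- The Heawood graph as a Haar graph. -/
noncomputable def heawoodIso : heawood ≃g haarGraph (cyclicTriple 7) where
  toEquiv := .ofBijective (cyclicVertex 7) (by decide)
  map_rel_iff' {i j} := by decide +revert

/-- The Möbius–Kantor graph as a Haar graph. -/
noncomputable def mobiusKantorIso : mobiusKantor ≃g haarGraph (cyclicTriple 8) where
  toEquiv := .ofBijective (cyclicVertex 8) (by decide)
  map_rel_iff' {i j} := by decide +revert

/-- The Pappus graph as a Haar graph. -/
noncomputable def pappusIso : pappus ≃g haarGraph planeTriple where
  toEquiv := .ofBijective planeVertex (by decide)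
  map_rel_iff' {i j} := by decide +revert

theorem mem_localSymmetries_of_perm {V ι : Type*} {Γ : SimpleGraph V} {v : V} {nb : ι → V}
    (g : Equiv.Perm V) (hg : ∀ u w, Γ.Adj (g u) (g w) ↔ Γ.Adj u w) (hgv : g v = v)
    {σ : Equiv.Perm ι} (hgσ : ∀ i, g (nb i) = nb (σ i)) : σ ∈ localSymmetries Γ v nb :=
  ⟨⟨g, hg _ _⟩, hgv, hgσ⟩

set_option maxRecDepth 10000 in
theorem heawood_isSArcTransitive_two : IsSArcTransitive heawood 2 :=
  ((haarGraph_isVertexTransitive _).of_iso heawoodIso).isSArcTransitive_two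
    (v := 0) (nb := ![1, -1, 5]) (by decide) <| subgroup_perm_fin_three_eq_top
      (mem_localSymmetries_of_perm (swap 1 13 * swap 2 8 * swap 3 9 * swap 10 12)
        (by decide) (by decide) (by decide))
      (mem_localSymmetries_of_perm (swap 3 7 * swap 4 8 * swap 5 13 * swap 6 12)
        (by decide) (by decide) (by decide))

set_option maxRecDepth 10000 in
theorem mobiusKantor_isSArcTransitive_two : IsSArcTransitive mobiusKantor 2 :=
  ((haarGraph_isVertexTransitive _).of_iso mobiusKantorIso).isSArcTransitive_two
    (v := 0) (nb := ![1, -1, 5]) (by decide) <| subgroup_perm_fin_three_eq_top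
      (mem_localSymmetries_of_perm
        (swap 1 15 * swap 2 10 * swap 3 11 * swap 4 6 * swap 7 9 * swap 12 14)
        (by decide) (by decide) (by decide))
      (mem_localSymmetries_of_perm
        (swap 2 12 * swap 3 11 * swap 4 10 * swap 5 15 * swap 6 14 * swap 7 13)
        (by decide) (by decide) (by decide))

set_option maxRecDepth 10000 in
theorem pappus_isSArcTransitive_two : IsSArcTransitive pappus 2 :=
  ((haarGraph_isVertexTransitive _).of_iso pappusIso).isSArcTransitive_two
    (v := 0) (nb := ![1, -1, 5]) (by decide) <| subgroup_perm_fin_three_eq_top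
      (mem_localSymmetries_of_perm
        (swap 1 17 * swap 2 12 * swap 3 11 * swap 4 6 * swap 7 15 * swap 8 16)
        (by decide) (by decide) (by decide))
      (mem_localSymmetries_of_perm
        (swap 2 8 * swap 3 9 * swap 4 16 * swap 5 17 * swap 6 12 * swap 7 13)
        (by decide) (by decide) (by decide))

end NamedGraphs

section CyclicTriples

instance {A ι : Type*} [AddCommGroup A] [DecidableEq A] [Fintype ι] [DecidableEq ι] (x : ι → A)
    (i j k : ι) : Decidable (IsHexagonal x i j k) := by
  unfold IsHexagonal
  infer_instance

theorem IsSidon.seven_le_of_cyclicTriple {N : ℕ} [NeZero N] (h : IsSidon (cyclicTriple N)) :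
    7 ≤ N := by
  by_contra! hN
  have hpos := NeZero.pos N
  unfold IsSidon at h
  revert h
  interval_cases N <;> decide

theorem eq_of_forall_isHexagonal_cyclicTriple {N : ℕ} (hx : IsSidon (cyclicTriple N)) {k : Fin 3}
    (hk : ∀ c, c ≠ k → IsHexagonal (cyclicTriple N) c k c) : N = 7 ∨ N = 8 ∨ N = 9 := by
  have dvd {m : ℕ} (h : (m : ZMod N) = 0) : N ∣ m := (ZMod.natCast_eq_zero_iff m N).1 h
  have relation (c d : Fin 3) (hck : c ≠ k) (hkd : k ≠ d) (hcd : c ≠ d) :=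
    (hk c hck).relation hx hck hkd hcd
  have h0 : cyclicTriple N 0 = 0 := rfl
  have h1 : cyclicTriple N 1 = 1 := rfl
  have h2 : cyclicTriple N 2 = -2 := rfl
  obtain ⟨m, hm, hdvd⟩ : ∃ m ∈ Finset.Icc 3 9, N ∣ m := by
    fin_cases k
    · have h := relation 2 1 (by decide) (by decide) (by decide)
      simp only [Fin.zero_eta, h0, h1, h2] at h
      rcases h with h | h | h | h
      · exact ⟨6, by decide, dvd (by linear_combination -h)⟩
      · exact ⟨3, by decide, dvd (by linear_combination h)⟩
      · exact ⟨7, by decide, dvd (by linear_combination -h)⟩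
      · exact ⟨8, by decide, dvd (by linear_combination -h)⟩
    · have h := relation 2 0 (by decide) (by decide) (by decide)
      simp only [Fin.mk_one, h0, h1, h2] at h
      rcases h with h | h | h | h
      · exact ⟨9, by decide, dvd (by linear_combination -h)⟩
      · exact ⟨7, by decide, dvd (by linear_combination h)⟩
      · exact ⟨8, by decide, dvd (by linear_combination -h)⟩
      · exact ⟨7, by decide, dvd (by linear_combination -h)⟩
    · have h := relation 1 0 (by decide) (by decide) (by decide)
      simp only [Fin.reduceFinMk, h0, h1, h2] at h
      rcases h with h | h | h | h
      · exact ⟨9, by decide, dvd (by linear_combination h)⟩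
      · exact ⟨8, by decide, dvd (by linear_combination -h)⟩
      · exact ⟨7, by decide, dvd (by linear_combination h)⟩
      · exact ⟨5, by decide, dvd (by linear_combination h)⟩
  rw [Finset.mem_Icc] at hm
  have : NeZero N := ⟨by rintro rfl; have := Nat.zero_dvd.1 hdvd; omega⟩
  have hle := Nat.le_of_dvd (by omega) hdvd
  have hge := hx.seven_le_of_cyclicTriple
  omega

theorem permutesColors_cyclicTriple_nine
    (f : haarGraph (cyclicTriple 9) ≃g haarGraph (cyclicTriple 9)) :
    PermutesColors (haarStep (cyclicTriple 9)) f :=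
  permutesColors_of_unique_not_isHexagonal (c := 2) (k := 0) (by decide) (by decide) (by decide)
    (by decide) f

end CyclicTriples

section Classification

variable {A ι : Type*} [AddCommGroup A]

theorem mem_of_haarGraph_preconnected {x : ι → A} (hconn : (haarGraph x).Preconnected)
    {K : AddSubgroup A} (hK : ∀ i j, x i - x j ∈ K) (a : A) : a ∈ K := by
  have := forall_of_preconnected hconn (v := (0, false))
    (P := fun v => if v.2 then ∀ i, v.1 - x i ∈ K else v.1 ∈ K) (by simp) (by
      rintro ⟨b, _ | _⟩ _ ⟨i, rfl⟩ hb
      · intro j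
        simpa [haarStep, add_sub_assoc] using add_mem hb (hK i j)
      · exact hb i)
  simpa using this (a, false)

/-- The homomorphism `ZMod n →+ A` with value `z` at `1`. -/
def zmodHom {n : ℕ} {z : A} (hz : n • z = 0) : ZMod n →+ A :=
  ZMod.lift n ⟨zmultiplesHom A z, by simpa using hz⟩

theorem zmodHom_intCast {n : ℕ} {z : A} (hz : n • z = 0) (m : ℤ) :
    zmodHom hz (m : ZMod n) = m • z := by
  simp [zmodHom]

theorem exists_addEquiv_zmod {z : A} (hz : AddSubgroup.zmultiples z = ⊤) :
    ∃ e : ZMod (addOrderOf z) ≃+ A, ∀ m : ℤ, e m = m • z := by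
  refine ⟨.ofBijective (zmodHom (addOrderOf_nsmul_eq_zero z)) ⟨?_, ?_⟩,
    zmodHom_intCast (addOrderOf_nsmul_eq_zero z)⟩
  · refine (ZMod.lift_injective _).2 fun m hm => ?_
    rw [ZMod.intCast_zmod_eq_zero_iff_dvd]
    exact addOrderOf_dvd_iff_zsmul_eq_zero.2 hm
  · intro a
    obtain ⟨m, rfl⟩ := AddSubgroup.mem_zmultiples_iff.1 (hz ▸ AddSubgroup.mem_top a)
    exact ⟨m, zmodHom_intCast _ m⟩

variable {x : Fin 3 → A}

theorem exists_affineFamilyEquiv_cyclicTriple (hconn : (haarGraph x).Preconnected)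
    (σ : Equiv.Perm (Fin 3)) (hσ : 3 • x (σ 0) = 2 • x (σ 1) + x (σ 2)) :
    ∃ N, Nonempty (AffineFamilyEquiv x (cyclicTriple N)) := by
  let z := x (σ 1) - x (σ 0)
  have h2 : x (σ 2) - x (σ 0) = (-2 : ℤ) • z := by
    linear_combination (norm := module) -hσ
  have hx : ∀ i, x (σ i) - x (σ 0) ∈ AddSubgroup.zmultiples z :=
    Fin.forall_fin_succ.2 ⟨by simp, Fin.forall_fin_two.2 ⟨AddSubgroup.mem_zmultiples z, _, h2.symm⟩⟩
  have hz : AddSubgroup.zmultiples z = ⊤ := by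
    refine eq_top_iff.2 fun a _ => mem_of_haarGraph_preconnected hconn (fun i j => ?_) a
    simpa using sub_mem (hx (σ.symm i)) (hx (σ.symm j))
  obtain ⟨e, he⟩ := exists_addEquiv_zmod hz
  refine ⟨addOrderOf z, ⟨AffineFamilyEquiv.symm ⟨e, σ, x (σ 0), ?_⟩⟩⟩
  refine Fin.forall_fin_succ.2 ⟨by simp [cyclicTriple], Fin.forall_fin_two.2 ⟨?_, ?_⟩⟩
  · have := he 1
    simp_all [cyclicTriple, z]
  · have := he (-2)
    simp_all [cyclicTriple, z, sub_eq_iff_eq_add]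

theorem exists_intCast_eq_zmod_three (p : ZMod 3) :
    ∃ m : ℤ, (m = 0 ∨ m = 1 ∨ m = -1) ∧ (m : ZMod 3) = p := by
  rcases (by decide : ∀ p : ZMod 3, p = 0 ∨ p = 1 ∨ p = -1) p with rfl | rfl | rfl
  exacts [⟨0, by simp⟩, ⟨1, by simp⟩, ⟨-1, by simp⟩]

theorem nonempty_affineFamilyEquiv_planeTriple (hconn : (haarGraph x).Preconnected)
    (hx : IsSidon x) (h3 : ∀ i j, 3 • x i = 3 • x j) :
    Nonempty (AffineFamilyEquiv x planeTriple) := by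
  have horder (i) : 3 • (x i - x 0) = 0 := by rw [nsmul_sub, h3 i 0, sub_self]
  let φ : ZMod 3 × ZMod 3 →+ A := (zmodHom (horder 1)).coprod (zmodHom (horder 2))
  have hφ (p q : ℤ) : φ (p, q) = p • (x 1 - x 0) + q • (x 2 - x 0) := by
    simp only [φ, AddMonoidHom.coprod_apply, zmodHom_intCast]
  have hφ1 : φ (1, 0) = x 1 - x 0 := by simpa using hφ 1 0
  have hφ2 : φ (0, 1) = x 2 - x 0 := by simpa using hφ 0 1
  have hrange : ∀ i, x i - x 0 ∈ φ.range :=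
    Fin.forall_fin_succ.2 ⟨by simp, Fin.forall_fin_two.2 ⟨⟨_, hφ1⟩, ⟨_, hφ2⟩⟩⟩
  have hsurj : Function.Surjective φ := fun a =>
    mem_of_haarGraph_preconnected hconn (K := φ.range)
      (fun i j => by simpa using sub_mem (hrange i) (hrange j)) a
  have hinj : Function.Injective φ := by
    refine (injective_iff_map_eq_zero φ).2 ?_
    rintro ⟨p, q⟩ h
    obtain ⟨p, hp, rfl⟩ := exists_intCast_eq_zmod_three p
    obtain ⟨q, hq, rfl⟩ := exists_intCast_eq_zmod_three q
    rw [hφ] at h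
    have h01 : x 0 ≠ x 1 := hx.injective.ne (by decide)
    have h02 : x 0 ≠ x 2 := hx.injective.ne (by decide)
    have h12 : x 1 ≠ x 2 := hx.injective.ne (by decide)
    have h0012 : x 0 + x 0 ≠ x 1 + x 2 := fun h => by simpa using hx h
    rcases hp with rfl | rfl | rfl <;> rcases hq with rfl | rfl | rfl
    · simp
    · exact absurd (by linear_combination (norm := module) -h) h02
    · exact absurd (by linear_combination (norm := module) h) h02
    · exact absurd (by linear_combination (norm := module) -h) h01
    · exact absurd (by linear_combination (norm := module) -h) h0012
    · exact absurd (by linear_combination (norm := module) h) h12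
    · exact absurd (by linear_combination (norm := module) h) h01
    · exact absurd (by linear_combination (norm := module) -h) h12
    · exact absurd (by linear_combination (norm := module) h) h0012
  refine ⟨AffineFamilyEquiv.symm ⟨.ofBijective φ ⟨hinj, hsurj⟩, .refl _, x 0, ?_⟩⟩
  refine Fin.forall_fin_succ.2 ⟨by simp [planeTriple], Fin.forall_fin_two.2 ⟨?_, ?_⟩⟩
  · exact sub_eq_iff_eq_add.1 hφ1.symm
  · exact sub_eq_iff_eq_add.1 hφ2.symm

end Classification

section HaarClassification

theorem exists_perm_of_pairwise_ne : ∀ {i j k : Fin 3}, i ≠ j → j ≠ k → i ≠ k →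
    ∃ σ : Equiv.Perm (Fin 3), σ 0 = i ∧ σ 1 = j ∧ σ 2 = k := by
  decide

theorem exists_ne_and_ne : ∀ i j : Fin 3, ∃ k, i ≠ k ∧ j ≠ k := by
  decide

variable {A B ι : Type*} [AddCommGroup A] [AddCommGroup B] {x : Fin 3 → A}

theorem three_nsmul_eq_or_exists_perm (hx : IsSidon x) {k : Fin 3}
    (hk : ∀ c, c ≠ k → IsHexagonal x c k c) :
    (∀ i j, 3 • x i = 3 • x j) ∨
      ∃ σ : Equiv.Perm (Fin 3), 3 • x (σ 0) = 2 • x (σ 1) + x (σ 2) := by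
  refine or_iff_not_imp_right.2 fun hσ => ?_
  have hne {i j l} (hij : i ≠ j) (hjl : j ≠ l) (hil : i ≠ l) : 3 • x i ≠ 2 • x j + x l := by
    obtain ⟨σ, rfl, rfl, rfl⟩ := exists_perm_of_pairwise_ne hij hjl hil
    exact fun h => hσ ⟨σ, h⟩
  have hxk (c) : 3 • x c = 3 • x k := by
    by_cases hck : c = k
    · rw [hck]
    obtain ⟨d, hcd, hkd⟩ := exists_ne_and_ne c k
    rcases (hk c hck).relation hx hck hkd hcd with h | h | h | h
    · exact h
    · exact absurd h (hne (Ne.symm hck) hcd hkd)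
    · exact absurd h (hne hck hkd hcd)
    · exact absurd (h.trans (add_comm _ _)) (hne hcd hkd.symm hck)
  exact fun i j => (hxk i).trans (hxk j).symm

theorem AffineFamilyEquiv.exists_not_permutesColors {x : ι → A} {y : ι → B}
    (E : AffineFamilyEquiv x y) {f : haarGraph x ≃g haarGraph x}
    (hf : ¬ PermutesColors (haarStep x) f) :
    ∃ g : haarGraph y ≃g haarGraph y, ¬ PermutesColors (haarStep y) g :=
  ⟨(E.haarIso.symm.trans f).trans E.haarIso, fun h => hf (.of_conj E.vertexEquiv_haarStep h)⟩

theorem eq_seven_or_eq_eight_of_not_permutesColors {N : ℕ} (hx : IsSidon (cyclicTriple N))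
    (hconn : (haarGraph (cyclicTriple N)).Preconnected)
    {f : haarGraph (cyclicTriple N) ≃g haarGraph (cyclicTriple N)}
    (hf : ¬ PermutesColors (haarStep (cyclicTriple N)) f) : N = 7 ∨ N = 8 := by
  obtain ⟨k, hk⟩ := exists_forall_isHexagonal hx.injective hconn f hf
  rcases eq_of_forall_isHexagonal_cyclicTriple hx hk with rfl | rfl | rfl
  · exact .inl rfl
  · exact .inr rfl
  · exact absurd (permutesColors_cyclicTriple_nine f) hf

theorem nonempty_haarGraph_iso (hconn : (haarGraph x).Preconnected)
    (hgirth : 4 < (haarGraph x).girth) {f : haarGraph x ≃g haarGraph x}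
    (hf : ¬ PermutesColors (haarStep x) f) :
    Nonempty (haarGraph x ≃g heawood) ∨ Nonempty (haarGraph x ≃g pappus) ∨
      Nonempty (haarGraph x ≃g mobiusKantor) := by
  have hinj : Function.Injective x := by
    by_contra hinj
    exact hf (permutesColors_of_not_injective hinj hconn f)
  have hx : IsSidon x := isSidon_of_four_lt_girth hinj hgirth
  obtain ⟨k, hk⟩ := exists_forall_isHexagonal hinj hconn f hf
  rcases three_nsmul_eq_or_exists_perm hx hk with h3 | ⟨σ, hσ⟩
  · obtain ⟨E⟩ := nonempty_affineFamilyEquiv_planeTriple hconn hx h3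
    exact .inr (.inl ⟨E.haarIso.trans pappusIso.symm⟩)
  · obtain ⟨N, ⟨E⟩⟩ := exists_affineFamilyEquiv_cyclicTriple hconn σ hσ
    obtain ⟨g, hg⟩ := E.exists_not_permutesColors hf
    rcases eq_seven_or_eq_eight_of_not_permutesColors (hx.of_affineFamilyEquiv E)
      (E.haarIso.preconnected_iff.1 hconn) hg with rfl | rfl
    · exact .inl ⟨E.haarIso.trans heawoodIso.symm⟩
    · exact .inr (.inr ⟨E.haarIso.trans mobiusKantorIso.symm⟩)

end HaarClassification

section GeneralizedDihedral

variable {H : Type*} [Group H] {N : Subgroup H} {t : H}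

/-- `H` is the generalized dihedral group over its subgroup `N`: it is the disjoint union of `N`
and `N * t`, where `t` is an involution that inverts `N`. -/
structure IsGeneralizedDihedral (N : Subgroup H) (t : H) : Prop where
  mul_self : t * t = 1
  conj_eq_inv : ∀ a ∈ N, t * a * t = a⁻¹
  notMem : t ∉ N
  mem_or_mul_mem : ∀ g, g ∈ N ∨ g * t ∈ N

namespace IsGeneralizedDihedral

theorem mul_eq_inv_mul (h : IsGeneralizedDihedral N t) {a : H} (ha : a ∈ N) :
    t * a = a⁻¹ * t := by
  rw [← h.conj_eq_inv a ha, mul_assoc, h.mul_self, mul_one]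

theorem mul_comm_of_mem (h : IsGeneralizedDihedral N t) {a b : H} (ha : a ∈ N) (hb : b ∈ N) :
    a * b = b * a := by
  have hab : (a * b)⁻¹ = a⁻¹ * b⁻¹ := by
    rw [← h.conj_eq_inv _ (mul_mem ha hb), ← h.conj_eq_inv _ ha, ← h.conj_eq_inv _ hb]
    simp [mul_assoc, ← mul_assoc t t, h.mul_self]
  simpa using congrArg (·⁻¹) hab

/-- The abelian group structure on `N`: its inversion is conjugation by `t`, hence
multiplicative. -/
abbrev commGroup (h : IsGeneralizedDihedral N t) : CommGroup N where
  mul_comm a b := Subtype.ext (h.mul_comm_of_mem a.2 b.2)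

end IsGeneralizedDihedral

theorem conj_eq_inv_of_mem_closure {k : Set H} (ht : t * t = 1)
    (hcomm : ∀ a ∈ k, ∀ b ∈ k, a * b = b * a) (hconj : ∀ a ∈ k, t * a * t = a⁻¹) {a : H}
    (ha : a ∈ Subgroup.closure k) : t * a * t = a⁻¹ := by
  have := Subgroup.isMulCommutative_closure hcomm
  induction ha using Subgroup.closure_induction with
  | mem a ha => exact hconj a ha
  | one => simpa using ht
  | mul a b ha hb iha ihb =>
    calc t * (a * b) * t = (t * a * t) * (t * b * t) := by
          simp [mul_assoc, ← mul_assoc t t, ht]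
      _ = (b * a)⁻¹ := by rw [iha, ihb, mul_inv_rev]
      _ = (a * b)⁻¹ := by rw [setLike_mul_comm hb ha]
  | inv a _ iha =>
    simpa [mul_assoc, inv_eq_of_mul_eq_one_left ht] using congrArg (·⁻¹) iha

theorem mem_or_mul_mem_of_closure_insert (ht : t * t = 1) (hconj : ∀ a ∈ N, t * a * t = a⁻¹)
    (hgen : Subgroup.closure (insert t (N : Set H)) = ⊤) (g : H) : g ∈ N ∨ g * t ∈ N := by
  have mul_t {g : H} (hg : g ∈ N ∨ g * t ∈ N) : g * t ∈ N ∨ g * t * t ∈ N :=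
    hg.symm.imp_right fun hg => by rwa [mul_assoc, ht, mul_one]
  have mul_mem_N {g a : H} (ha : a ∈ N) (hg : g ∈ N ∨ g * t ∈ N) : g * a ∈ N ∨ g * a * t ∈ N := by
    have hgat : g * a * t = g * t * a⁻¹ := by
      rw [← hconj a ha]
      simp [mul_assoc, ← mul_assoc t t, ht]
    exact hg.imp (mul_mem · ha) fun hg => hgat ▸ mul_mem hg (inv_mem ha)
  have hg : g ∈ Subgroup.closure (insert t (N : Set H)) := hgen ▸ Subgroup.mem_top g
  induction hg using Subgroup.closure_induction_right with
  | one => exact .inl (one_mem N)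
  | mul_right g _ s hs ih =>
    rcases hs with rfl | hs
    · exact mul_t ih
    · exact mul_mem_N hs ih
  | mul_inv_cancel g _ s hs ih =>
    rcases hs with rfl | hs
    · rw [inv_eq_of_mul_eq_one_left ht]
      exact mul_t ih
    · exact mul_mem_N (inv_mem hs) ih

theorem IsGeneralizedDihedral.of_closure {k : Set H} (ht : t * t = 1)
    (hcomm : ∀ a ∈ k, ∀ b ∈ k, a * b = b * a) (hconj : ∀ a ∈ k, t * a * t = a⁻¹)
    (htk : t ∉ Subgroup.closure k) (hgen : Subgroup.closure (insert t k) = ⊤) :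
    IsGeneralizedDihedral (Subgroup.closure k) t where
  mul_self := ht
  conj_eq_inv _ := conj_eq_inv_of_mem_closure ht hcomm hconj
  notMem := htk
  mem_or_mul_mem :=
    mem_or_mul_mem_of_closure_insert ht (fun _ => conj_eq_inv_of_mem_closure ht hcomm hconj)
      (top_le_iff.1 (hgen.ge.trans
        (Subgroup.closure_mono (Set.insert_subset_insert Subgroup.subset_closure))))

theorem cayley_preconnected {T : Set H} (hT : Subgroup.closure T = ⊤) :
    (cayley H T).Preconnected := by
  have hstep {g s : H} (hs : s ∈ T) : (cayley H T).Reachable g (g * s) := by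
    by_cases hg : g = g * s
    · rw [← hg]
    · exact SimpleGraph.Adj.reachable ⟨hg, .inl ⟨s, hs, rfl⟩⟩
  have hone (g : H) : (cayley H T).Reachable 1 g := by
    have hg : g ∈ Subgroup.closure T := hT ▸ Subgroup.mem_top g
    induction hg using Subgroup.closure_induction_right with
    | one => rfl
    | mul_right g _ s hs ih => exact ih.trans (hstep hs)
    | mul_inv_cancel g _ s hs ih =>
      exact ih.trans (by simpa using (hstep (g := g * s⁻¹) hs).symm)
  exact fun g h => (hone g).symm.trans (hone h)

theorem cayley_range_adj {ι : Type*} {s : ι → H} (hs : ∀ i, s i * s i = 1) (hs1 : ∀ i, s i ≠ 1)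
    {g h : H} : (cayley H (Set.range s)).Adj g h ↔ ∃ i, g * s i = h := by
  simp only [cayley, SimpleGraph.fromRel_adj, Set.exists_range_iff]
  constructor
  · rintro ⟨-, ⟨i, rfl⟩ | ⟨i, rfl⟩⟩
    · exact ⟨i, rfl⟩
    · exact ⟨i, by rw [mul_assoc, hs, mul_one]⟩
  · rintro ⟨i, rfl⟩
    exact ⟨fun h => hs1 i (by simpa using h), .inl ⟨i, rfl⟩⟩

namespace IsGeneralizedDihedral

variable {ι : Type*}

theorem cayley_adj (h : IsGeneralizedDihedral N t) (a : ι → N) {g g' : H} :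
    (cayley H (Set.range fun i => t * (a i : H))).Adj g g' ↔ ∃ i, g * (t * a i) = g' := by
  refine cayley_range_adj (fun i => ?_) (fun i hi => h.notMem ?_)
  · rw [← mul_assoc, h.conj_eq_inv _ (a i).2, inv_mul_cancel]
  · rw [eq_inv_of_mul_eq_one_left hi]
    exact inv_mem (a i).2

/-- The correspondence of the vertices of Haar graphs over `N` with `H = N ∪ N * t`. The inversion
turns right multiplication by `t * a` into translation by `a`. -/
noncomputable def vertexEquiv (h : IsGeneralizedDihedral N t) : Additive N × Bool ≃ H :=
  .ofBijective (fun v => (v.1.toMul : H)⁻¹ * if v.2 then t else 1) <| by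
    have hne (b c : N) : (b : H)⁻¹ ≠ (c : H)⁻¹ * t := fun hbc => h.notMem <| by
      rw [eq_comm, inv_mul_eq_iff_eq_mul] at hbc
      exact hbc ▸ mul_mem c.2 (inv_mem b.2)
    constructor
    · rintro ⟨b, _ | _⟩ ⟨c, _ | _⟩ hbc
      · simpa using hbc
      · exact absurd (by simpa using hbc) (hne b.toMul c.toMul)
      · exact absurd (by simpa using hbc.symm) (hne c.toMul b.toMul)
      · simpa using hbc
    · intro g
      rcases h.mem_or_mul_mem g with hg | hg
      · exact ⟨(.ofMul ⟨g, hg⟩⁻¹, false), by simp⟩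
      · exact ⟨(.ofMul ⟨g * t, hg⟩⁻¹, true), by simp [mul_assoc, h.mul_self]⟩

theorem vertexEquiv_haarStep (h : IsGeneralizedDihedral N t) (a : ι → N) :
    letI := h.commGroup
    ∀ v i, h.vertexEquiv (haarStep (fun i => Additive.ofMul (a i)) i v) =
      h.vertexEquiv v * (t * a i) := by
  rintro ⟨b, _ | _⟩ i
  · have hcomm := h.mul_comm_of_mem (inv_mem (a i).2) (inv_mem b.toMul.2)
    simp [vertexEquiv, haarStep, h.mul_eq_inv_mul, ← mul_assoc, hcomm]
  · have hcomm := h.mul_comm_of_mem (a i).2 (inv_mem b.toMul.2)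
    simp [vertexEquiv, haarStep, div_eq_mul_inv, hcomm, mul_assoc, ← mul_assoc t t, h.mul_self]

end IsGeneralizedDihedral

theorem statement19_general (h : IsGeneralizedDihedral N t) (a : Fin 3 → N) {T : Set H}
    (hT : T = Set.range fun i => t * (a i : H)) (hconn : (cayley H T).Preconnected)
    (hgirth : 4 < (cayley H T).girth)
    (hex : ∃ f : cayley H T ≃g cayley H T, ¬ PermutesColors (fun i g => g * (t * a i)) f) :
    IsSArcTransitive (cayley H T) 2 ∧
      (Nonempty (cayley H T ≃g heawood) ∨ Nonempty (cayley H T ≃g pappus) ∨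
        Nonempty (cayley H T ≃g mobiusKantor)) := by
  subst hT
  obtain ⟨f, hf⟩ := hex
  let := h.commGroup
  have hstep := h.vertexEquiv_haarStep a
  let E := (isoOfPermutesColors (fun _ _ => haarGraph_adj) (fun _ _ => h.cayley_adj a)
    h.vertexEquiv (.refl _) hstep).symm
  have hf' : ¬ PermutesColors (haarStep fun i => Additive.ofMul (a i))
      ((E.symm.trans f).trans E) := fun hE =>
    hf (.of_conj (e := h.vertexEquiv.symm) (σ := .refl _)
      (fun g i => h.vertexEquiv.symm_apply_eq.2 (by simp [hstep])) hE)
  rcases nonempty_haarGraph_iso (E.preconnected_iff.1 hconn) (E.girth_eq ▸ hgirth) hf' with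
    ⟨⟨e⟩⟩ | ⟨⟨e⟩⟩ | ⟨⟨e⟩⟩
  · exact ⟨heawood_isSArcTransitive_two.of_iso (E.trans e), .inl ⟨E.trans e⟩⟩
  · exact ⟨pappus_isSArcTransitive_two.of_iso (E.trans e), .inr (.inl ⟨E.trans e⟩)⟩
  · exact ⟨mobiusKantor_isSArcTransitive_two.of_iso (E.trans e), .inr (.inr ⟨E.trans e⟩)⟩

end GeneralizedDihedral

section Presentation

variable {m n ℓ : ℕ}

theorem gent_mul_self : gent m n ℓ * gent m n ℓ = 1 := by
  have h : gent m n ℓ ^ 2 = 1 := PresentedGroup.one_of_mem (by simp [rels])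
  rwa [sq] at h

theorem gent_conj_genx : gent m n ℓ * genx m n ℓ * gent m n ℓ = (genx m n ℓ)⁻¹ := by
  have h : gent m n ℓ * genx m n ℓ * (gent m n ℓ)⁻¹ * genx m n ℓ = 1 :=
    PresentedGroup.one_of_mem (rels := rels m n ℓ)
      (x := .of .t * .of .x * (.of .t)⁻¹ * .of .x) (by simp [rels])
  rwa [inv_eq_of_mul_eq_one_left gent_mul_self, mul_eq_one_iff_eq_inv] at h

theorem gent_conj_geny : gent m n ℓ * geny m n ℓ * gent m n ℓ = (geny m n ℓ)⁻¹ := by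
  have h : gent m n ℓ * geny m n ℓ * (gent m n ℓ)⁻¹ * geny m n ℓ = 1 :=
    PresentedGroup.one_of_mem (rels := rels m n ℓ)
      (x := .of .t * .of .y * (.of .t)⁻¹ * .of .y) (by simp [rels])
  rwa [inv_eq_of_mul_eq_one_left gent_mul_self, mul_eq_one_iff_eq_inv] at h

theorem commute_genx_geny : Commute (genx m n ℓ) (geny m n ℓ) := by
  have h : genx m n ℓ * geny m n ℓ * (genx m n ℓ)⁻¹ * (geny m n ℓ)⁻¹ = 1 :=
    PresentedGroup.one_of_mem (rels := rels m n ℓ)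
      (x := .of .x * .of .y * (.of .x)⁻¹ * (.of .y)⁻¹) (by simp [rels])
  rwa [mul_inv_eq_one, mul_inv_eq_iff_eq_mul] at h

theorem exists_sign_hom : ∃ χ : G m n ℓ →* ℤˣ,
    χ (gent m n ℓ) = -1 ∧ χ (genx m n ℓ) = 1 ∧ χ (geny m n ℓ) = 1 := by
  let sign : Gen → ℤˣ
    | .t => -1
    | .x => 1
    | .y => 1
  have hsign : ∀ r ∈ rels m n ℓ, FreeGroup.lift sign r = 1 := by
    rintro r (rfl | rfl | rfl | rfl | rfl | rfl) <;> simp [sign]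
  exact ⟨PresentedGroup.toGroup hsign, PresentedGroup.toGroup.of hsign,
    PresentedGroup.toGroup.of hsign, PresentedGroup.toGroup.of hsign⟩

/-- The subgroup `⟨x, y⟩` of translations of the honeycomb torus. -/
def translations (m n ℓ : ℕ) : Subgroup (G m n ℓ) :=
  Subgroup.closure {genx m n ℓ, geny m n ℓ}

theorem genx_mem_translations : genx m n ℓ ∈ translations m n ℓ :=
  Subgroup.subset_closure (.inl rfl)

theorem geny_mem_translations : geny m n ℓ ∈ translations m n ℓ :=
  Subgroup.subset_closure (.inr rfl)

theorem gent_notMem_translations : gent m n ℓ ∉ translations m n ℓ := by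
  obtain ⟨χ, ht, hx, hy⟩ := exists_sign_hom (m := m) (n := n) (ℓ := ℓ)
  have hker : translations m n ℓ ≤ χ.ker := by
    rw [translations, Subgroup.closure_le]
    rintro _ (rfl | rfl)
    exacts [hx, hy]
  intro h
  have h1 : χ (gent m n ℓ) = 1 := hker h
  exact absurd (ht.symm.trans h1) (by decide)

theorem closure_gent_genx_geny :
    Subgroup.closure {gent m n ℓ, genx m n ℓ, geny m n ℓ} = ⊤ := by
  rw [eq_top_iff, ← PresentedGroup.closure_range_of]
  refine Subgroup.closure_mono ?_
  rintro _ ⟨_ | _ | _, rfl⟩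
  exacts [.inl rfl, .inr (.inl rfl), .inr (.inr rfl)]

theorem isGeneralizedDihedral_translations :
    IsGeneralizedDihedral (translations m n ℓ) (gent m n ℓ) := by
  refine .of_closure gent_mul_self ?_ ?_ gent_notMem_translations closure_gent_genx_geny
  · rintro _ (rfl | rfl) _ (rfl | rfl)
    exacts [rfl, commute_genx_geny, commute_genx_geny.symm, rfl]
  · rintro _ (rfl | rfl)
    exacts [gent_conj_genx, gent_conj_geny]

/-- The triple `1, x, y`, whose left translate by `t` is the connection set `S m n ℓ`. -/
def translationTriple (m n ℓ : ℕ) : Fin 3 → translations m n ℓ :=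
  ![1, ⟨genx m n ℓ, genx_mem_translations⟩, ⟨geny m n ℓ, geny_mem_translations⟩]

theorem S_eq_range :
    S m n ℓ = Set.range fun i => gent m n ℓ * (translationTriple m n ℓ i : G m n ℓ) := by
  ext g
  simp [S, translationTriple, Fin.exists_fin_succ, eq_comm]

theorem closure_S : Subgroup.closure (S m n ℓ) = ⊤ := by
  rw [eq_top_iff, ← closure_gent_genx_geny, Subgroup.closure_le]
  have ht : gent m n ℓ ∈ Subgroup.closure (S m n ℓ) := Subgroup.subset_closure (.inl rfl)
  rintro _ (rfl | rfl | rfl)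
  · exact ht
  · exact (Subgroup.mul_mem_cancel_left _ ht).1 (Subgroup.subset_closure (.inr (.inl rfl)))
  · exact (Subgroup.mul_mem_cancel_left _ ht).1 (Subgroup.subset_closure (.inr (.inr rfl)))

theorem colorClasses_eq_range :
    colorClasses m n ℓ = Set.range fun i =>
      {e | ∃ g, e = s(g, g * (gent m n ℓ * (translationTriple m n ℓ i : G m n ℓ)))} := by
  ext C
  simp [colorClasses, Red, Blue, Green, translationTriple, Fin.exists_fin_succ, eq_comm]

theorem isColorPermuting_of_permutesColors
    {f : cayley (G m n ℓ) (S m n ℓ) ≃g cayley (G m n ℓ) (S m n ℓ)}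
    (hf : PermutesColors (fun i g => g * (gent m n ℓ * translationTriple m n ℓ i)) f) :
    IsColorPermuting f := by
  obtain ⟨π, hπ⟩ := hf
  unfold IsColorPermuting
  rw [colorClasses_eq_range]
  rintro _ ⟨i, rfl⟩
  refine ⟨π i, Set.ext fun e => ⟨?_, ?_⟩⟩
  · rintro ⟨g, rfl⟩
    refine ⟨_, ⟨f.symm g, rfl⟩, ?_⟩
    rw [Sym2.map_mk, hπ, f.apply_symm_apply]
  · rintro ⟨_, ⟨g, rfl⟩, rfl⟩
    exact ⟨f g, by rw [Sym2.map_mk, hπ]⟩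

end Presentation

/-- If `Γ = HTG(m,n,ℓ)` has girth `6` and admits an automorphism that is not color
permuting, then `Γ` is `2`-arc-transitive and is isomorphic to the Heawood graph, the
Pappus graph or the Möbius–Kantor graph. -/
theorem statement19 (m n ℓ : ℕ) (hm : 0 < m) (hn : 4 ≤ n) (hne : Even n)
    (hl : ℓ ≤ n - 1) (hpar : ℓ % 2 = m % 2)
    (hgirth : (cayley (G m n ℓ) (S m n ℓ)).girth = 6)
    (hex : ∃ α : cayley (G m n ℓ) (S m n ℓ) ≃g cayley (G m n ℓ) (S m n ℓ),
      ¬ IsColorPermuting α) :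
    IsSArcTransitive (cayley (G m n ℓ) (S m n ℓ)) 2 ∧
      (Nonempty (cayley (G m n ℓ) (S m n ℓ) ≃g heawood) ∨
       Nonempty (cayley (G m n ℓ) (S m n ℓ) ≃g pappus) ∨
       Nonempty (cayley (G m n ℓ) (S m n ℓ) ≃g mobiusKantor)) := by
  exact statement19_general isGeneralizedDihedral_translations (translationTriple m n ℓ) S_eq_range
    (cayley_preconnected closure_S) (by omega)
    (hex.imp fun _ => mt isColorPermuting_of_permutesColors)

end HTGPaper
end
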